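/- arXiv:1605.00479 — 6 statements merged into one kernel-verified Lean document; each statement's English description precedes it below -/
import Mathlib

section
/- Let A ∈ ℝ^{n×p}, let α > 0, β > 0, and let S ⊆ {1,…,p} with |S| ≤ k. Suppose that every nonzero h in the null space of A satisfies (1 + βα)·‖h_S‖₁ ≤ ‖h_{S̄}‖₁, where h_S denotes the restriction of h to the coordinates in S and S̄ is the complement of S. Then every k-sparse vector x₀ ∈ ℝ^p supported on S is the unique minimizer of ‖x‖₁ + β·Φ_α(x) subject to Ax = Ax₀. -/
open Finset

/-- The penalty function `φ_α(t) = α|t| / (1 + α|t|)`. -/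
noncomputable def phi (α t : ℝ) : ℝ := α * |t| / (1 + α * |t|)

/-- `Φ_α(x) = ∑_i φ_α(x_i)`. -/
noncomputable def Phi (α : ℝ) {p : ℕ} (x : Fin p → ℝ) : ℝ := ∑ i, phi α (x i)

/-- Restriction of a vector to an index set `S` (zero outside `S`). -/
def restr {p : ℕ} (x : Fin p → ℝ) (S : Finset (Fin p)) : Fin p → ℝ :=
  fun i => if i ∈ S then x i else 0

/-- The ℓ¹ norm. -/
noncomputable def l1 {p : ℕ} (x : Fin p → ℝ) : ℝ := ∑ i, |x i|

theorem phi_nonneg_aux (α t : ℝ) (hα : 0 < α) : 0 ≤ phi α t := by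
  unfold phi; positivity

theorem phi_lt_aux (α x y : ℝ) (hα : 0 < α) (h : x ≠ y) :
    phi α y < phi α x + α * |x - y| := by
  have hd : 0 < α * |x - y| := mul_pos hα (abs_pos.mpr (sub_ne_zero.mpr h))
  have hle : α * |y| ≤ α * |x| + α * |x - y| := by
    have := abs_sub_abs_le_abs_sub y x
    rw [abs_sub_comm y x] at this
    nlinarith
  unfold phi
  have hA : 0 ≤ α * |y| := by positivity
  have hB : 0 ≤ α * |x| := by positivity
  generalize α * |y| = a at *
  generalize α * |x| = b at *
  generalize α * |x - y| = d at *
  rw [div_add' _ _ _ (by positivity), div_lt_div_iff₀ (by positivity) (by positivity)]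
  rcases hA.eq_or_lt with h0 | h0
  · subst h0; nlinarith [mul_nonneg hd.le hB]
  · nlinarith [mul_pos hd h0, mul_nonneg hd.le hB, mul_nonneg (mul_nonneg hd.le hB) hA]

theorem stmt0 {n p k : ℕ} (A : Matrix (Fin n) (Fin p) ℝ) (α β : ℝ)
    (hα : 0 < α) (hβ : 0 < β)
    (S : Finset (Fin p)) (hS : S.card ≤ k)
    (hNSP : ∀ h : Fin p → ℝ, A.mulVec h = 0 → h ≠ 0 →
      (1 + β * α) * l1 (restr h S) ≤ l1 (restr h Sᶜ))
    (x₀ : Fin p → ℝ) (hsupp : ∀ i, x₀ i ≠ 0 → i ∈ S) :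
    ∀ x : Fin p → ℝ, A.mulVec x = A.mulVec x₀ → x ≠ x₀ →
      l1 x₀ + β * Phi α x₀ < l1 x + β * Phi α x := by
  intro x hx hne
  have hN := hNSP (x - x₀) (by rw [Matrix.mulVec_sub, hx, sub_self]) (sub_ne_zero.mpr hne)
  have hβα : 0 < β * α := mul_pos hβ hα
  have hstrict : ∀ i, x i ≠ x₀ i →
      |x₀ i| + β * phi α (x₀ i) + (|restr (x - x₀) Sᶜ i| - (1 + β * α) * |restr (x - x₀) S i|)
        < |x i| + β * phi α (x i) := by
    intro i hi
    by_cases hiS : i ∈ S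
    · have h1 := mul_lt_mul_of_pos_left (phi_lt_aux α (x i) (x₀ i) hα hi) hβ
      have h2 := abs_sub_abs_le_abs_sub (x₀ i) (x i)
      rw [abs_sub_comm (x₀ i) (x i)] at h2
      simp only [restr, Finset.mem_compl, hiS, not_true_eq_false, if_true, if_false, abs_zero,
        Pi.sub_apply]
      nlinarith
    · have h0 : x₀ i = 0 := by
        by_contra hc
        exact hiS (hsupp i hc)
      have hxi : 0 < |x i| := abs_pos.mpr (by rwa [h0] at hi)
      have hp : 0 < phi α (x i) := by unfold phi; positivity
      have := mul_pos hβ hp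
      simp [restr, hiS, h0, phi]
      simpa [phi] using this
  have hle : ∀ i ∈ Finset.univ,
      |x₀ i| + β * phi α (x₀ i) + (|restr (x - x₀) Sᶜ i| - (1 + β * α) * |restr (x - x₀) S i|)
        ≤ |x i| + β * phi α (x i) := by
    intro i _
    by_cases hi : x i = x₀ i
    · simp [restr, hi]
    · exact (hstrict i hi).le
  obtain ⟨j, hj⟩ := Function.ne_iff.mp hne
  have hsum := Finset.sum_lt_sum hle ⟨j, Finset.mem_univ j, hstrict j hj⟩
  simp only [Finset.sum_add_distrib, Finset.sum_sub_distrib, ← Finset.mul_sum] at hsum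
  simp only [l1, Phi] at hN ⊢
  linarith
end

section
/- Let A ∈ ℝ^{n×p} satisfy the restricted isometry property of order 2k with constant δ_{2k} ≤ 0.4663, let α > 0 and 0 < β ≤ 1/(20α). Then every k-sparse vector x₀ ∈ ℝ^p is the unique minimizer of ‖x‖₁ + β·Φ_α(x) subject to Ax = Ax₀. -/
open Finset

/-- The ℓ² norm. -/
noncomputable def l2 {p : ℕ} (x : Fin p → ℝ) : ℝ := Real.sqrt (∑ i, (x i) ^ 2)

/-- `x` is `k`-sparse: its support fits inside a set of at most `k` indices. -/
def Sparse {p : ℕ} (k : ℕ) (x : Fin p → ℝ) : Prop :=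
  ∃ S : Finset (Fin p), S.card ≤ k ∧ ∀ i, x i ≠ 0 → i ∈ S

/-- `A` satisfies the restricted isometry property of order `k` with constant `δ ∈ [0,1)`. -/
def RIP {n p : ℕ} (A : Matrix (Fin n) (Fin p) ℝ) (k : ℕ) (δ : ℝ) : Prop :=
  0 ≤ δ ∧ δ < 1 ∧ ∀ x : Fin p → ℝ, Sparse k x →
    (1 - δ) * (l2 x) ^ 2 ≤ (l2 (A.mulVec x)) ^ 2 ∧
    (l2 (A.mulVec x)) ^ 2 ≤ (1 + δ) * (l2 x) ^ 2


/-- Selection of the `k` largest values of `g` on `B`, with a threshold `m`. -/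
theorem exists_top {ι : Type*} [DecidableEq ι] (B : Finset ι) (g : ι → ℝ) (hg : ∀ i, 0 ≤ g i)
    (k : ℕ) : ∃ T ⊆ B, T.card ≤ k ∧ ∃ m : ℝ, 0 ≤ m ∧ (∀ i ∈ T, m ≤ g i) ∧
      (∀ i ∈ B \ T, g i ≤ m) ∧ (T.card = k ∨ m = 0) := by
  induction k with
  | zero =>
    refine ⟨∅, by simp, by simp, ∑ i ∈ B, g i, Finset.sum_nonneg (fun i _ => hg i), by simp, ?_,
      Or.inl (by simp)⟩
    intro i hi
    exact Finset.single_le_sum (fun i _ => hg i) (by simpa using hi)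
  | succ k ih =>
    obtain ⟨T, hTB, hTk, m, hm, h1, h2, h3⟩ := ih
    rcases h3 with h3 | h3
    · rcases (B \ T).eq_empty_or_nonempty with he | hne
      · exact ⟨T, hTB, by omega, 0, le_rfl, fun i _ => hg i, by simp [he], Or.inr rfl⟩
      · obtain ⟨j, hj, hmax⟩ := Finset.exists_max_image (B \ T) g hne
        have hj' := Finset.mem_sdiff.1 hj
        refine ⟨insert j T, ?_, ?_, g j, hg j, ?_, ?_, Or.inl ?_⟩
        · exact Finset.insert_subset hj'.1 hTB
        · rw [Finset.card_insert_of_notMem hj'.2]; omega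
        · intro i hi
          rcases Finset.mem_insert.1 hi with rfl | hi
          · exact le_rfl
          · exact (h2 j hj).trans (h1 i hi)
        · intro i hi
          apply hmax
          simp only [Finset.mem_sdiff, Finset.mem_insert, not_or] at hi ⊢
          exact ⟨hi.1, hi.2.2⟩
        · rw [Finset.card_insert_of_notMem hj'.2]; omega
    · exact ⟨T, hTB, by omega, m, hm, h1, h2, Or.inr h3⟩

/-- Linear functionals on the `ℓ¹ ∩ ℓ^∞` polytope are bounded by their top-`k` sums. -/
theorem top_bound {ι : Type*} [DecidableEq ι] (B T : Finset ι) (hTB : T ⊆ B) (g v : ι → ℝ)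
    (k : ℕ) (m θ : ℝ) (hm : 0 ≤ m) (h1 : ∀ i ∈ T, m ≤ g i) (h2 : ∀ i ∈ B \ T, g i ≤ m)
    (h3 : T.card = k ∨ m = 0) (hv0 : ∀ i ∈ B, 0 ≤ v i) (hv : ∀ i ∈ B, v i ≤ θ)
    (hsum : ∑ i ∈ B, v i ≤ k * θ) : ∑ i ∈ B, g i * v i ≤ θ * ∑ i ∈ T, g i := by
  have e1 : ∑ i ∈ B \ T, g i * v i ≤ ∑ i ∈ B \ T, m * v i := by
    apply Finset.sum_le_sum
    intro i hi
    exact mul_le_mul_of_nonneg_right (h2 i hi) (hv0 i (Finset.mem_sdiff.1 hi).1)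
  have e2 : ∑ i ∈ T, g i * v i ≤ ∑ i ∈ T, (m * v i + (θ * g i - m * θ)) := by
    apply Finset.sum_le_sum
    intro i hi
    nlinarith [mul_nonneg (sub_nonneg.2 (h1 i hi)) (sub_nonneg.2 (hv i (hTB hi)))]
  rw [Finset.sum_add_distrib, Finset.sum_sub_distrib, ← Finset.mul_sum, ← Finset.mul_sum,
    Finset.sum_const, nsmul_eq_mul] at e2
  rw [← Finset.mul_sum] at e1
  rw [← Finset.sum_sdiff hTB] at hsum ⊢
  have e3 : m * (∑ i ∈ B \ T, v i + ∑ i ∈ T, v i) ≤ m * (k * θ) :=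
    mul_le_mul_of_nonneg_left hsum hm
  rcases h3 with h3 | h3
  · rw [h3] at e2; linarith
  · subst h3; linarith

theorem l2_sq {p : ℕ} (x : Fin p → ℝ) : l2 x ^ 2 = x ⬝ᵥ x := by
  unfold l2 dotProduct
  rw [Real.sq_sqrt (Finset.sum_nonneg fun i _ => sq_nonneg _)]
  exact Finset.sum_congr rfl fun i _ => sq _

/-- Null space property for the top-`k` set. -/
theorem nsp {n p k : ℕ} (A : Matrix (Fin n) (Fin p) ℝ) (δ : ℝ)
    (hRIP : RIP A (2 * k) δ) (hδ : δ ≤ 0.4663) (h : Fin p → ℝ) (hA : A.mulVec h = 0)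
    (hne : h ≠ 0) (T : Finset (Fin p)) (hT : T.card ≤ k) (m : ℝ) (hm : 0 ≤ m)
    (h1 : ∀ i ∈ T, m ≤ |h i|) (h2 : ∀ i ∈ Tᶜ, |h i| ≤ m) (h3 : T.card = k ∨ m = 0) :
    ∑ i ∈ T, |h i| < ∑ i ∈ Tᶜ, |h i| := by
  by_contra hcon
  push Not at hcon
  obtain ⟨hδ0, -, hR⟩ := hRIP
  set s := ∑ i ∈ T, |h i| with hs
  have hs0 : 0 < s := by
    by_contra hs0
    apply hne
    have hz : ∑ i, |h i| = 0 := by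
      apply le_antisymm _ (Finset.sum_nonneg fun i _ => abs_nonneg _)
      rw [← Finset.sum_add_sum_compl T]; linarith
    funext i
    have := (Finset.sum_eq_zero_iff_of_nonneg fun i _ => abs_nonneg (h i)).1 hz i (mem_univ i)
    simpa using this
  have hk : 0 < (k : ℝ) := by
    rcases Nat.eq_zero_or_pos k with hk | hk
    · have : T = ∅ := Finset.card_eq_zero.1 (by omega)
      rw [hs, this] at hs0; simp at hs0
    · exact_mod_cast hk
  obtain ⟨r, hr⟩ : ∃ r : ℝ, k * r = s := ⟨s / k, by field_simp⟩
  have hr0 : 0 < r := by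
    by_contra hc
    nlinarith
  have hmr : m ≤ r := by
    rcases h3 with h3 | h3
    · have : (T.card : ℝ) * m ≤ s := by
        rw [← nsmul_eq_mul, ← Finset.sum_const]; exact Finset.sum_le_sum h1
      rw [h3, ← hr] at this
      exact le_of_mul_le_mul_left this hk
    · linarith
  let a : Fin p → ℝ := fun i => if i ∈ T then h i else 0
  let b : Fin p → ℝ := fun i => if i ∈ T then 0 else h i
  have hab : a + b = h := by
    funext i; by_cases hi : i ∈ T <;> simp [a, b, hi]
  let c : Fin p → ℝ := Matrix.vecMul (A.mulVec a) A
  have hc : ∀ u : Fin p → ℝ, A.mulVec a ⬝ᵥ A.mulVec u = ∑ i, c i * u i := by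
    intro u; rw [Matrix.dotProduct_mulVec]; rfl
  obtain ⟨T', hT'B, hT'k, m', hm', t1, t2, t3⟩ := exists_top Tᶜ (fun i => |c i|) (fun i => abs_nonneg _) k
  let u : Fin p → ℝ := fun i => if i ∈ T' then (if 0 ≤ c i then -r else r) else 0
  have hdisj : ∀ i, i ∈ T' → i ∉ T := fun i hi => by simpa using hT'B hi
  have hcu : ∑ i, c i * u i = - (r * ∑ i ∈ T', |c i|) := by
    have : ∀ i, c i * u i = if i ∈ T' then - (r * |c i|) else 0 := by
      intro i
      by_cases hi : i ∈ T'
      · by_cases h0 : 0 ≤ c i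
        · simp [u, hi, h0, abs_of_nonneg h0]; ring
        · simp [u, hi, h0, abs_of_neg (not_le.1 h0)]; ring
      · simp [u, hi]
    simp_rw [this]
    rw [Finset.sum_ite_mem, univ_inter, Finset.sum_neg_distrib, Finset.mul_sum]
  have hcb : - (r * ∑ i ∈ T', |c i|) ≤ ∑ i, c i * b i := by
    have e := top_bound Tᶜ T' hT'B (fun i => |c i|) (fun i => |h i|) k m' r hm' t1 t2 t3
      (fun i _ => abs_nonneg _) (fun i hi => (h2 i hi).trans hmr) (by rw [hr]; exact hcon)
    have e' : ∑ i, c i * b i = ∑ i ∈ Tᶜ, c i * h i := by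
      rw [← Finset.sum_add_sum_compl T, Finset.sum_eq_zero, zero_add]
      · apply Finset.sum_congr rfl
        intro i hi
        have : i ∉ T := by simpa using hi
        simp [b, this]
      · intro i hi; simp [b, hi]
    have e'' : - ∑ i ∈ Tᶜ, c i * h i ≤ ∑ i ∈ Tᶜ, |c i| * |h i| := by
      rw [← Finset.sum_neg_distrib]
      apply Finset.sum_le_sum
      intro i _
      rw [← abs_mul]; exact neg_le_abs _
    rw [e']; linarith
  have hAab : A.mulVec a ⬝ᵥ A.mulVec b = - (A.mulVec a ⬝ᵥ A.mulVec a) := by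
    have : A.mulVec a ⬝ᵥ A.mulVec (a + b) = 0 := by rw [hab, hA]; simp
    rw [Matrix.mulVec_add, dotProduct_add] at this
    linarith
  have hcross : A.mulVec a ⬝ᵥ A.mulVec u ≤ - (A.mulVec a ⬝ᵥ A.mulVec a) := by
    rw [← hAab, hc, hc, hcu]; exact hcb
  have sp1 : Sparse (2 * k) (a + (1 / 2 : ℝ) • u) := by
    refine ⟨T ∪ T', (Finset.card_union_le _ _).trans (by omega), ?_⟩
    intro i hi
    by_contra hn
    simp only [Finset.mem_union, not_or] at hn
    apply hi
    simp [a, u, hn.1, hn.2]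
  have sp2 : Sparse (2 * k) u := by
    refine ⟨T', by omega, ?_⟩
    intro i hi
    by_contra hn
    apply hi
    simp [u, hn]
  have r1 := (hR _ sp1).1
  have r2 := (hR _ sp2).2
  rw [l2_sq, l2_sq] at r1 r2
  have hau : a ⬝ᵥ u = 0 := by
    apply Finset.sum_eq_zero
    intro i _
    by_cases hi : i ∈ T'
    · simp [a, hdisj i hi]
    · simp [u, hi]
  have huu : u ⬝ᵥ u ≤ k * r ^ 2 := by
    have : ∀ i, u i * u i = if i ∈ T' then r ^ 2 else 0 := by
      intro i
      by_cases hi : i ∈ T'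
      · by_cases h0 : 0 ≤ c i <;> simp [u, hi, h0] <;> ring
      · simp [u, hi]
    unfold dotProduct
    simp_rw [this]
    rw [Finset.sum_ite_mem, univ_inter, Finset.sum_const, nsmul_eq_mul]
    have : (T'.card : ℝ) ≤ k := by exact_mod_cast hT'k
    exact mul_le_mul_of_nonneg_right this (sq_nonneg _)
  have haa : k * r ^ 2 ≤ a ⬝ᵥ a := by
    have e : a ⬝ᵥ a = ∑ i ∈ T, |h i| ^ 2 := by
      have : ∀ i, a i * a i = if i ∈ T then |h i| ^ 2 else 0 := by
        intro i
        by_cases hi : i ∈ T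
        · simp [a, hi, sq]
        · simp [a, hi]
      unfold dotProduct
      simp_rw [this]
      rw [Finset.sum_ite_mem, univ_inter]
    have cs := sq_sum_le_card_mul_sum_sq (s := T) (f := fun i => |h i|)
    rw [← hs, ← e, ← hr] at cs
    have hTk : (T.card : ℝ) ≤ k := by exact_mod_cast hT
    have ha0 : 0 ≤ a ⬝ᵥ a := by rw [e]; positivity
    have : (k : ℝ) * (k * r ^ 2) ≤ k * (a ⬝ᵥ a) := by
      nlinarith [mul_le_mul_of_nonneg_right hTk ha0]
    exact le_of_mul_le_mul_left this hk
  have hua : A.mulVec u ⬝ᵥ A.mulVec a = A.mulVec a ⬝ᵥ A.mulVec u := dotProduct_comm _ _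
  have hua' : u ⬝ᵥ a = 0 := by rw [dotProduct_comm, hau]
  simp only [Matrix.mulVec_add, Matrix.mulVec_smul, dotProduct_add, add_dotProduct,
    smul_dotProduct, dotProduct_smul, smul_eq_mul, hau, hua, hua'] at r1
  have hpos : 0 < (k : ℝ) * r ^ 2 := by positivity
  generalize A.mulVec a ⬝ᵥ A.mulVec u = q1 at *
  generalize A.mulVec a ⬝ᵥ A.mulVec a = q2 at *
  generalize A.mulVec u ⬝ᵥ A.mulVec u = q3 at *
  generalize a ⬝ᵥ a = X at *
  generalize u ⬝ᵥ u = U at *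
  have f1 : (1 - δ) * X ≤ δ * U / 2 := by nlinarith
  have f2 : δ * U ≤ δ * X := mul_le_mul_of_nonneg_left (huu.trans haa) hδ0
  nlinarith

/-- The scalar objective. -/
noncomputable def obj (α β t : ℝ) : ℝ := |t| + β * phi α t

theorem obj_eq {α β t : ℝ} : obj α β t = |t| * (1 + β * (α / (1 + α * |t|))) := by
  unfold obj phi; ring

theorem obj_mono {α β s t : ℝ} (hα : 0 < α) (hβ : 0 < β) (hst : |s| ≤ |t|) :
    obj α β s ≤ obj α β t := by
  unfold obj phi
  have hs := abs_nonneg s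
  have ht := abs_nonneg t
  generalize |s| = x at *
  generalize |t| = y at *
  have : α * x / (1 + α * x) ≤ α * y / (1 + α * y) := by
    rw [div_le_div_iff₀ (by positivity) (by positivity)]
    nlinarith
  gcongr

theorem obj_sub {α β s t : ℝ} (hα : 0 < α) (hβ : 0 < β) :
    obj α β s ≤ obj α β (s + t) + obj α β t := by
  have h : |s| ≤ |(|s + t| + |t|)| := by
    rw [abs_of_nonneg (by positivity : 0 ≤ |s + t| + |t|)]
    have := abs_sub (s + t) t
    simpa using this
  refine (obj_mono hα hβ h).trans ?_
  rw [obj_eq, obj_eq, obj_eq, abs_of_nonneg (by positivity : 0 ≤ |s + t| + |t|)]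
  have hs := abs_nonneg (s + t)
  have ht := abs_nonneg t
  generalize |s + t| = x at *
  generalize |t| = y at *
  have a1 : x * (1 + β * (α / (1 + α * (x + y)))) ≤ x * (1 + β * (α / (1 + α * x))) := by
    gcongr; linarith
  have a2 : y * (1 + β * (α / (1 + α * (x + y)))) ≤ y * (1 + β * (α / (1 + α * y))) := by
    gcongr; linarith
  linarith

theorem stmt1 {n p k : ℕ} (A : Matrix (Fin n) (Fin p) ℝ) (δ α β : ℝ)
    (hRIP : RIP A (2 * k) δ) (hδ : δ ≤ 0.4663)
    (hα : 0 < α) (hβ0 : 0 < β) (hβ : β ≤ 1 / (20 * α))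
    (x₀ : Fin p → ℝ) (hx₀ : Sparse k x₀) :
    ∀ x : Fin p → ℝ, A.mulVec x = A.mulVec x₀ → x ≠ x₀ →
      l1 x₀ + β * Phi α x₀ < l1 x + β * Phi α x := by
  intro x hAx hxne
  obtain ⟨S, hSk, hS⟩ := hx₀
  have hobj : ∀ y : Fin p → ℝ, l1 y + β * Phi α y = ∑ i, obj α β (y i) := by
    intro y
    unfold l1 Phi obj
    rw [Finset.sum_add_distrib, Finset.mul_sum]
  rw [hobj, hobj]
  obtain ⟨h, rfl⟩ : ∃ h, x = x₀ + h := ⟨x - x₀, by simp⟩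
  have hA : A.mulVec h = 0 := by
    rw [Matrix.mulVec_add] at hAx; simpa using hAx
  have hne : h ≠ 0 := by rintro rfl; simp at hxne
  obtain ⟨T, -, hTk, m, hm, h1, h2, h3⟩ :=
    exists_top univ (fun i => |h i|) (fun i => abs_nonneg _) k
  have h2' : ∀ i ∈ Tᶜ, |h i| ≤ m := by
    intro i hi; apply h2; simpa using hi
  have hnsp := nsp A δ hRIP hδ h hA hne T hTk m hm h1 h2' h3
  have ho0 : ∀ t, 0 ≤ obj α β t := by
    intro t; unfold obj phi; positivity
  -- objective version of the null space property on `T`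
  have hT1 : ∑ i ∈ T, obj α β (h i) ≤ (1 + β * (α / (1 + α * m))) * ∑ i ∈ T, |h i| := by
    rw [Finset.mul_sum]
    apply Finset.sum_le_sum
    intro i hi
    rw [obj_eq, mul_comm]
    have := h1 i hi
    have := abs_nonneg (h i)
    gcongr
  have hT2 : (1 + β * (α / (1 + α * m))) * ∑ i ∈ Tᶜ, |h i| ≤ ∑ i ∈ Tᶜ, obj α β (h i) := by
    rw [Finset.mul_sum]
    apply Finset.sum_le_sum
    intro i hi
    rw [obj_eq, mul_comm]
    have := h2' i hi
    have := abs_nonneg (h i)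
    gcongr
  have hT3 : ∑ i ∈ T, obj α β (h i) < ∑ i ∈ Tᶜ, obj α β (h i) :=
    hT1.trans_lt ((mul_lt_mul_of_pos_left hnsp (by positivity)).trans_le hT2)
  -- passage from `T` to `S`
  have hST : ∑ i ∈ S, obj α β (h i) ≤ ∑ i ∈ T, obj α β (h i) := by
    have e := top_bound univ T (subset_univ _) (fun i => obj α β (h i))
      (fun i => if i ∈ S then 1 else 0) k (obj α β m) 1 (ho0 m)
      (fun i hi => obj_mono hα hβ0 (by rw [abs_of_nonneg hm]; exact h1 i hi))
      (fun i hi => obj_mono hα hβ0 (by rw [abs_of_nonneg hm]; exact h2 i hi))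
      (h3.imp id (by rintro rfl; simp [obj, phi]))
      (fun i _ => by positivity) (fun i _ => by split_ifs <;> norm_num)
      (by simpa using hSk)
    simpa using e
  have hsplitT := Finset.sum_add_sum_compl T (fun i => obj α β (h i))
  have hsplitS := Finset.sum_add_sum_compl S (fun i => obj α β (h i))
  have hx0S := Finset.sum_add_sum_compl S (fun i => obj α β (x₀ i))
  have hxS := Finset.sum_add_sum_compl S (fun i => obj α β ((x₀ + h) i))
  have hz : ∀ i ∈ Sᶜ, x₀ i = 0 := by
    intro i hi
    by_contra hc
    exact (by simpa using hi : i ∉ S) (hS i hc)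
  have z1 : ∑ i ∈ Sᶜ, obj α β (x₀ i) = 0 :=
    Finset.sum_eq_zero fun i hi => by rw [hz i hi]; simp [obj, phi]
  have z2 : ∑ i ∈ Sᶜ, obj α β ((x₀ + h) i) = ∑ i ∈ Sᶜ, obj α β (h i) :=
    Finset.sum_congr rfl fun i hi => by rw [Pi.add_apply, hz i hi, zero_add]
  have z3 : ∑ i ∈ S, obj α β (x₀ i) ≤
      ∑ i ∈ S, obj α β ((x₀ + h) i) + ∑ i ∈ S, obj α β (h i) := by
    rw [← Finset.sum_add_distrib]
    exact Finset.sum_le_sum fun i _ => obj_sub hα hβ0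
  linarith
end

section
/- Let α > 0 and β > 0 with αβ < 1. Let x₀ ∈ ℝ^p be arbitrary and let S be a set of indices of its k largest-magnitude components. If h ∈ ℝ^p satisfies ‖x₀ + h‖₁ + β·Φ_α(x₀ + h) ≤ ‖x₀‖₁ + β·Φ_α(x₀), then ‖h_{S̄}‖₁ ≤ C₁·‖h_S‖₁ + C₂·‖(x₀)_{S̄}‖₁, where C₁ = (1 + αβ)/(1 − αβ) and C₂ = 2/(1 − αβ). -/
open Finset

/-- `phi α` is `α`-Lipschitz (one-sided form). -/
theorem phi_sub_le (α : ℝ) (hα : 0 < α) (x h : ℝ) :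
    phi α x - phi α (x + h) ≤ α * |h| := by
  unfold phi
  have hx := abs_nonneg x
  have hy := abs_nonneg (x + h)
  have hh := abs_nonneg h
  have ht : |x| ≤ |x + h| + |h| := by
    have := abs_sub (x + h) h
    simpa using this
  have h1 : 0 < 1 + α * |x| := by positivity
  have h2 : 0 < 1 + α * |x + h| := by positivity
  have e : α * |x| / (1 + α * |x|) - α * |x + h| / (1 + α * |x + h|)
      = α * (|x| - |x + h|) / ((1 + α * |x|) * (1 + α * |x + h|)) := by
    field_simp
    ring
  rw [e, div_le_iff₀ (by positivity)]
  have hD : 1 ≤ (1 + α * |x|) * (1 + α * |x + h|) :=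
    one_le_mul_of_one_le_of_one_le (by nlinarith) (by nlinarith)
  calc α * (|x| - |x + h|) ≤ α * |h| := by
        apply mul_le_mul_of_nonneg_left _ hα.le
        linarith
    _ ≤ _ := le_mul_of_one_le_right (by positivity) hD

theorem stmt2 {p k : ℕ} (α β : ℝ) (hα : 0 < α) (hβ : 0 < β) (hαβ : α * β < 1)
    (x₀ : Fin p → ℝ) (S : Finset (Fin p)) (hcard : S.card = k)
    (hlargest : ∀ i ∈ S, ∀ j ∉ S, |x₀ j| ≤ |x₀ i|)
    (h : Fin p → ℝ)
    (hmin : l1 (x₀ + h) + β * Phi α (x₀ + h) ≤ l1 x₀ + β * Phi α x₀) :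
    l1 (restr h Sᶜ) ≤
      (1 + α * β) / (1 - α * β) * l1 (restr h S) +
      2 / (1 - α * β) * l1 (restr x₀ Sᶜ) := by
  have hc : 0 < 1 - α * β := by linarith
  have key : ∀ i, (1 - α * β) * |restr h Sᶜ i| - (1 + α * β) * |restr h S i|
      - 2 * |restr x₀ Sᶜ i| ≤ (|(x₀ + h) i| + β * phi α ((x₀ + h) i))
        - (|x₀ i| + β * phi α (x₀ i)) := by
    intro i
    have hl := mul_le_mul_of_nonneg_left (phi_sub_le α hα (x₀ i) (h i)) hβ.le
    have t1 : |x₀ i| ≤ |x₀ i + h i| + |h i| := by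
      have := abs_sub (x₀ i + h i) (h i)
      simpa using this
    have t2 : |h i| ≤ |x₀ i + h i| + |x₀ i| := by
      have := abs_sub (x₀ i + h i) (x₀ i)
      simpa using this
    by_cases hi : i ∈ S
    · simp only [restr, Finset.mem_compl, hi, not_true_eq_false, if_true, if_false, abs_zero,
        Pi.add_apply]
      nlinarith
    · simp only [restr, Finset.mem_compl, hi, not_false_eq_true, if_true, if_false, abs_zero,
        Pi.add_apply]
      nlinarith
  have hs := Finset.sum_le_sum (fun i (_ : i ∈ Finset.univ) => key i)
  simp only [Finset.sum_sub_distrib, Finset.sum_add_distrib, ← Finset.mul_sum] at hs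
  simp only [l1, Phi] at hmin ⊢
  rw [div_mul_eq_mul_div, div_mul_eq_mul_div, ← add_div, le_div_iff₀ hc]
  linarith
end

section
/- Let 𝒜 : ℝ^{n₁×n₂} → ℝ^{n₃} be a linear map, let α > 0, β > 0, and let r ≤ m = min(n₁, n₂). Suppose every nonzero H in the null space of 𝒜 satisfies (1 + βα)·∑_{i=1}^r σ_i(H) ≤ ∑_{i=r+1}^m σ_i(H). Then every matrix X ∈ ℝ^{n₁×n₂} of rank at most r is the unique minimizer of ‖Z‖_* + β·Φ̂_α(Z) subject to 𝒜Z = 𝒜X. -/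
open Finset Matrix

/-- The Frobenius norm of a matrix. -/
noncomputable def frob {n₁ n₂ : ℕ} (X : Matrix (Fin n₁) (Fin n₂) ℝ) : ℝ :=
  Real.sqrt (∑ i, ∑ j, (X i j) ^ 2)

/-- The rectangular `n₁ × n₂` matrix with `σ` on the diagonal and zeros elsewhere. -/
def diagRect {n₁ n₂ : ℕ} (σ : Fin (min n₁ n₂) → ℝ) : Matrix (Fin n₁) (Fin n₂) ℝ :=
  Matrix.of fun i j =>
    if h : (i : ℕ) = (j : ℕ) then σ ⟨i, lt_min i.isLt (lt_of_eq_of_lt h j.isLt)⟩ else 0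

/-- `σ` is the (nonincreasing) sequence of singular values of `X`:
`σ` is antitone, nonnegative, and `X = U (diag σ) Vᵀ` for orthogonal `U`, `V`. -/
def IsSVDVals {n₁ n₂ : ℕ} (X : Matrix (Fin n₁) (Fin n₂) ℝ)
    (σ : Fin (min n₁ n₂) → ℝ) : Prop :=
  Antitone σ ∧ (∀ i, 0 ≤ σ i) ∧
  ∃ (U : Matrix (Fin n₁) (Fin n₁) ℝ) (V : Matrix (Fin n₂) (Fin n₂) ℝ),
    Uᵀ * U = 1 ∧ Vᵀ * V = 1 ∧ X = U * diagRect σ * Vᵀ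

/-- `𝒜` satisfies the rank restricted isometry property of order `r`
with constant `δ ∈ [0,1)`. -/
def RankRIP {n₁ n₂ n₃ : ℕ} (𝒜 : Matrix (Fin n₁) (Fin n₂) ℝ →ₗ[ℝ] (Fin n₃ → ℝ))
    (r : ℕ) (δ : ℝ) : Prop :=
  0 ≤ δ ∧ δ < 1 ∧ ∀ X : Matrix (Fin n₁) (Fin n₂) ℝ, X.rank ≤ r →
    (1 - δ) * (frob X) ^ 2 ≤ (l2 (𝒜 X)) ^ 2 ∧
    (l2 (𝒜 X)) ^ 2 ≤ (1 + δ) * (frob X) ^ 2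


lemma quad_diag {ι : Type*} [Fintype ι] [DecidableEq ι] (T O : Matrix ι ι ℝ) (μ : ι → ℝ)
    (h : T = O * diagonal μ * Oᵀ) (x : ι → ℝ) :
    x ⬝ᵥ (T *ᵥ x) = ∑ j, μ j * (Oᵀ *ᵥ x) j ^ 2 := by
  rw [h, ← mulVec_mulVec, ← mulVec_mulVec, dotProduct_mulVec, ← mulVec_transpose]
  simp only [dotProduct, mulVec_diagonal]
  exact Finset.sum_congr rfl fun j _ => by ring

lemma norm_orth {ι : Type*} [Fintype ι] [DecidableEq ι] (O : Matrix ι ι ℝ)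
    (h : Oᵀ * O = 1) (x : ι → ℝ) :
    ∑ j, (Oᵀ *ᵥ x) j ^ 2 = x ⬝ᵥ x := by
  have h' : O * Oᵀ = 1 := mul_eq_one_comm.mp h
  have := quad_diag (1 : Matrix ι ι ℝ) O (fun _ => 1) (by
    rw [show diagonal (fun _ : ι => (1:ℝ)) = 1 from diagonal_one, mul_one, h']) x
  simpa using this.symm

lemma trace_lower {ι : Type*} [Fintype ι] [DecidableEq ι] (T : Matrix ι ι ℝ) (hT : T.IsHermitian)
    (c : Fin (Fintype.card ι) → ℝ)
    (hc : ∀ i : Fin (Fintype.card ι), ∃ W : Submodule ℝ (ι → ℝ), (i : ℕ) + 1 ≤ Module.finrank ℝ W ∧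
      ∀ x ∈ W, c i * (x ⬝ᵥ x) ≤ x ⬝ᵥ (T *ᵥ x)) :
    ∑ i, c i ≤ T.trace := by
  set e : Fin (Fintype.card ι) ≃ ι := Fintype.equivOfCardEq (Fintype.card_fin _) with he
  have htr : T.trace = ∑ i, hT.eigenvalues₀ i := by
    rw [hT.trace_eq_sum_eigenvalues, ← e.sum_comp]
    refine Finset.sum_congr rfl fun j _ => ?_
    simp [IsHermitian.eigenvalues, he]
  rw [htr]
  refine Finset.sum_le_sum fun i _ => ?_
  obtain ⟨W, hW, hq⟩ := hc i
  set O : Matrix ι ι ℝ := (hT.eigenvectorUnitary : Matrix ι ι ℝ) with hO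
  have hOO : Oᵀ * O = 1 := by
    have := Unitary.coe_star_mul_self hT.eigenvectorUnitary
    rwa [star_eq_conjTranspose, conjTranspose_eq_transpose_of_trivial] at this
  have hTO : T = O * diagonal hT.eigenvalues * Oᵀ := by
    have := hT.spectral_theorem
    rw [Unitary.conjStarAlgAut_apply, star_eq_conjTranspose,
      conjTranspose_eq_transpose_of_trivial] at this
    exact this
  let L : W →ₗ[ℝ] (Fin (i:ℕ) → ℝ) :=
    (LinearMap.funLeft ℝ ℝ (fun j : Fin (i:ℕ) => e (Fin.castLE i.2.le j))) ∘ₗ Oᵀ.mulVecLin ∘ₗ W.subtype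
  have hker : LinearMap.ker L ≠ ⊥ := LinearMap.ker_ne_bot_of_finrank_lt (by simp; omega)
  obtain ⟨w, hwk, hw0⟩ := (Submodule.ne_bot_iff _).mp hker
  have hx := hq w w.2
  have hxpos : 0 < (w : ι → ℝ) ⬝ᵥ w := by
    have h0 : (w : ι → ℝ) ≠ 0 := by simpa using hw0
    have : 0 ≤ (w : ι → ℝ) ⬝ᵥ w := Finset.sum_nonneg fun j _ => mul_self_nonneg _
    exact lt_of_le_of_ne this (Ne.symm (by simpa [dotProduct_self_eq_zero] using h0))
  have hz : ∀ j : Fin (Fintype.card ι), j < i → (Oᵀ *ᵥ (w : ι → ℝ)) (e j) = 0 := by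
    intro j hj
    have := congrFun (LinearMap.mem_ker.mp hwk) ⟨j, hj⟩
    simpa [L, LinearMap.funLeft, mulVec_transpose] using this
  have hup : (w : ι → ℝ) ⬝ᵥ (T *ᵥ w) ≤ hT.eigenvalues₀ i * ((w : ι → ℝ) ⬝ᵥ w) := by
    rw [quad_diag T O _ hTO, ← norm_orth O hOO, Finset.mul_sum, ← e.sum_comp,
      ← e.sum_comp (fun j => hT.eigenvalues₀ i * _)]
    refine Finset.sum_le_sum fun j _ => ?_
    rcases lt_or_ge j i with hj | hj
    · rw [hz j hj]; simp
    · refine mul_le_mul_of_nonneg_right ?_ (sq_nonneg _)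
      simpa [IsHermitian.eigenvalues, he] using hT.eigenvalues₀_antitone hj
  exact le_of_mul_le_mul_right (hx.trans hup) hxpos


lemma diagRect_bilin {n₁ n₂ : ℕ} (σ : Fin (min n₁ n₂) → ℝ) (u : Fin n₁ → ℝ) (v : Fin n₂ → ℝ) :
    u ⬝ᵥ (diagRect σ *ᵥ v) =
      ∑ i, σ i * (u (Fin.castLE (min_le_left _ _) i) * v (Fin.castLE (min_le_right _ _) i)) := by
  simp only [dotProduct, mulVec, diagRect, of_apply, Finset.mul_sum]
  rw [← Finset.sum_product']
  symm
  refine Finset.sum_of_injOn (fun i => (Fin.castLE (min_le_left _ _) i, Fin.castLE (min_le_right _ _) i))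
    ?_ ?_ ?_ ?_
  · intro a _ b _ h
    simpa [Fin.ext_iff] using h
  · intro a _; simp
  · rintro ⟨i, j⟩ _ h
    rw [dif_neg]; · simp
    intro hij
    apply h
    simp only at hij
    refine ⟨⟨i, lt_min i.2 (hij ▸ j.2)⟩, by simp, ?_⟩
    simp [Fin.ext_iff, hij]
  · intro i _
    simp; ring

lemma svd_bilin {n₁ n₂ : ℕ} (A : Matrix (Fin n₁) (Fin n₂) ℝ) (σ : Fin (min n₁ n₂) → ℝ)
    (U : Matrix (Fin n₁) (Fin n₁) ℝ) (V : Matrix (Fin n₂) (Fin n₂) ℝ)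
    (h : A = U * diagRect σ * Vᵀ) (u : Fin n₁ → ℝ) (v : Fin n₂ → ℝ) :
    u ⬝ᵥ (A *ᵥ v) = ∑ i, σ i * ((Uᵀ *ᵥ u) (Fin.castLE (min_le_left _ _) i) *
      (Vᵀ *ᵥ v) (Fin.castLE (min_le_right _ _) i)) := by
  rw [← diagRect_bilin, h, ← mulVec_mulVec, ← mulVec_mulVec, dotProduct_mulVec, ← mulVec_transpose]

lemma sum_castLE_le {m n : ℕ} (h : m ≤ n) (f : Fin n → ℝ) (hf : ∀ i, 0 ≤ f i) :
    ∑ i : Fin m, f (Fin.castLE h i) ≤ ∑ j, f j := by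
  refine (Finset.sum_map Finset.univ (Fin.castLEEmb h) f).symm.le.trans ?_
  exact Finset.sum_le_univ_sum_of_nonneg hf

/-- dilation -/
def dil {n₁ n₂ : ℕ} (A : Matrix (Fin n₁) (Fin n₂) ℝ) :
    Matrix (Fin n₁ ⊕ Fin n₂) (Fin n₁ ⊕ Fin n₂) ℝ := fromBlocks 0 A Aᵀ 0

lemma dil_quad {n₁ n₂ : ℕ} (A : Matrix (Fin n₁) (Fin n₂) ℝ) (x : Fin n₁ ⊕ Fin n₂ → ℝ) :
    x ⬝ᵥ (dil A *ᵥ x) = 2 * ((x ∘ Sum.inl) ⬝ᵥ (A *ᵥ (x ∘ Sum.inr))) := by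
  rw [dil, fromBlocks_mulVec]
  conv_lhs => rw [← Sum.elim_comp_inl_inr x]
  rw [sumElim_dotProduct_sumElim]
  simp only [zero_mulVec, zero_add, add_zero]
  rw [two_mul]
  congr 1
  rw [mulVec_transpose, dotProduct_comm, ← dotProduct_mulVec]
  simp

lemma dil_herm {n₁ n₂ : ℕ} (A : Matrix (Fin n₁) (Fin n₂) ℝ) : (dil A).IsHermitian := by
  rw [dil, isHermitian_fromBlocks_iff]
  simp [IsHermitian, conjTranspose_eq_transpose_of_trivial]

lemma norm_sum {n₁ n₂ : ℕ} (x : Fin n₁ ⊕ Fin n₂ → ℝ) :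
    x ⬝ᵥ x = (x ∘ Sum.inl) ⬝ᵥ (x ∘ Sum.inl) + (x ∘ Sum.inr) ⬝ᵥ (x ∘ Sum.inr) := by
  conv_lhs => rw [← Sum.elim_comp_inl_inr x]
  rw [sumElim_dotProduct_sumElim]

/-- the extension of a sequence by zero -/
noncomputable def sv {m : ℕ} (a : Fin m → ℝ) (i : ℕ) : ℝ := if h : i < m then a ⟨i, h⟩ else 0

lemma sum_le_norm {n₁ n₂ : ℕ}  (U : Matrix (Fin n₁) (Fin n₁) ℝ) (V : Matrix (Fin n₂) (Fin n₂) ℝ)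
    (hU : Uᵀ * U = 1) (hV : Vᵀ * V = 1) (x : Fin n₁ ⊕ Fin n₂ → ℝ) :
    ∑ i, ((Uᵀ *ᵥ (x ∘ Sum.inl)) (Fin.castLE (min_le_left n₁ n₂) i) ^ 2 +
      (Vᵀ *ᵥ (x ∘ Sum.inr)) (Fin.castLE (min_le_right n₁ n₂) i) ^ 2) ≤ x ⬝ᵥ x := by
  rw [norm_sum, ← norm_orth U hU, ← norm_orth V hV, Finset.sum_add_distrib]
  exact add_le_add (sum_castLE_le _ (fun j => (Uᵀ *ᵥ (x ∘ Sum.inl)) j ^ 2) fun _ => sq_nonneg _)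
   (sum_castLE_le _ (fun j => (Vᵀ *ᵥ (x ∘ Sum.inr)) j ^ 2) fun _ => sq_nonneg _)

lemma majorant {n₁ n₂ : ℕ} (A : Matrix (Fin n₁) (Fin n₂) ℝ) (a : Fin (min n₁ n₂) → ℝ)
    (h : IsSVDVals A a) (t : ℝ) (ht : 0 ≤ t) :
    ∃ Q : Matrix (Fin n₁ ⊕ Fin n₂) (Fin n₁ ⊕ Fin n₂) ℝ, Q.IsHermitian ∧
      Q.trace = ∑ j, max (a j - t) 0 ∧
      (∀ x, 0 ≤ x ⬝ᵥ (Q *ᵥ x)) ∧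
      ∀ x, x ⬝ᵥ (dil A *ᵥ x) ≤ x ⬝ᵥ (Q *ᵥ x) + t * (x ⬝ᵥ x) := by
  obtain ⟨-, ha, U, V, hU, hV, hA⟩ := h
  let e : Fin (min n₁ n₂) → (Fin n₁ ⊕ Fin n₂ → ℝ) := fun i =>
    Sum.elim (Uᵀ (Fin.castLE (min_le_left _ _) i)) (Vᵀ (Fin.castLE (min_le_right _ _) i))
  have hee : ∀ i, e i ⬝ᵥ e i = 2 := by
    intro i
    simp only [e, sumElim_dotProduct_sumElim]
    have h1 := congrFun (congrFun hU (Fin.castLE (min_le_left _ _) i)) (Fin.castLE (min_le_left _ _) i)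
    have h2 := congrFun (congrFun hV (Fin.castLE (min_le_right _ _) i)) (Fin.castLE (min_le_right _ _) i)
    simp only [mul_apply, one_apply_eq] at h1 h2
    simp only [dotProduct, transpose_apply] at *
    linarith
  have hex : ∀ i x, e i ⬝ᵥ x = (Uᵀ *ᵥ (x ∘ Sum.inl)) (Fin.castLE (min_le_left _ _) i) +
      (Vᵀ *ᵥ (x ∘ Sum.inr)) (Fin.castLE (min_le_right _ _) i) := by
    intro i x
    conv_lhs => rw [← Sum.elim_comp_inl_inr x]
    simp only [e, sumElim_dotProduct_sumElim]
    rfl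
  have hquad : ∀ x, x ⬝ᵥ ((∑ i, (max (a i - t) 0 / 2) • vecMulVec (e i) (e i)) *ᵥ x) =
      ∑ i, max (a i - t) 0 / 2 * (e i ⬝ᵥ x) ^ 2 := by
    intro x
    rw [sum_mulVec, dotProduct_sum]
    refine Finset.sum_congr rfl fun i _ => ?_
    rw [smul_mulVec, dotProduct_smul, vecMulVec_mulVec, dotProduct_comm]
    simp only [op_smul_eq_smul, smul_dotProduct, smul_eq_mul]
    ring
  refine ⟨∑ i, (max (a i - t) 0 / 2) • vecMulVec (e i) (e i), ?_, ?_, ?_, ?_⟩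
  · rw [IsHermitian, conjTranspose_eq_transpose_of_trivial, transpose_sum]
    refine Finset.sum_congr rfl fun i _ => ?_
    rw [transpose_smul, transpose_vecMulVec]
  · rw [trace_sum]
    refine Finset.sum_congr rfl fun i _ => ?_
    rw [trace_smul, trace_vecMulVec, hee]
    simp
  · intro x
    rw [hquad]
    exact Finset.sum_nonneg fun i _ => by positivity
  · intro x
    rw [hquad, dil_quad, svd_bilin A a U V hA, Finset.mul_sum]
    refine le_trans ?_ (add_le_add_right (mul_le_mul_of_nonneg_left (sum_le_norm U V hU hV x) ht) _)
    rw [Finset.mul_sum, ← Finset.sum_add_distrib]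
    refine Finset.sum_le_sum fun i _ => ?_
    rw [hex]
    generalize (Uᵀ *ᵥ (x ∘ Sum.inl)) (Fin.castLE (min_le_left _ _) i) = p
    generalize (Vᵀ *ᵥ (x ∘ Sum.inr)) (Fin.castLE (min_le_right _ _) i) = q
    have h0 := ha i
    rcases le_total (a i) t with h | h
    · rw [max_eq_right (by linarith)]
      nlinarith [mul_nonneg h0 (sq_nonneg (p - q)), mul_nonneg (sub_nonneg.2 h) (add_nonneg (sq_nonneg p) (sq_nonneg q))]
    · rw [max_eq_left (by linarith)]
      nlinarith [mul_nonneg ht (sq_nonneg (p - q)), mul_nonneg (sub_nonneg.2 h) (sq_nonneg (p - q))]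

lemma neg_svd {n₁ n₂ : ℕ} {A : Matrix (Fin n₁) (Fin n₂) ℝ} {a : Fin (min n₁ n₂) → ℝ}
    (h : IsSVDVals A a) : IsSVDVals (-A) a := by
  obtain ⟨h1, h2, U, V, hU, hV, hA⟩ := h
  exact ⟨h1, h2, -U, V, by simpa using hU, hV, by rw [hA]; simp⟩


lemma sum_castLE_eq {m n : ℕ} (h : m ≤ n) (f : Fin n → ℝ) (hf : ∀ i : Fin n, m ≤ (i : ℕ) → f i = 0) :
    ∑ i : Fin m, f (Fin.castLE h i) = ∑ j, f j := by
  refine (Finset.sum_map Finset.univ (Fin.castLEEmb h) f).symm.trans ?_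
  refine Finset.sum_subset (Finset.subset_univ _) fun j _ hj => hf j ?_
  by_contra hlt
  push Not at hlt
  exact hj (by simp only [Finset.mem_map, Finset.mem_univ, true_and]; exact ⟨⟨j, hlt⟩, rfl⟩)

/-- extension by zero as a linear map -/
def extZ (k n : ℕ) : (Fin k → ℝ) →ₗ[ℝ] (Fin n → ℝ) where
  toFun w := fun j => if h : (j : ℕ) < k then w ⟨j, h⟩ else 0
  map_add' w w' := by ext j; by_cases h : (j : ℕ) < k <;> simp [h]
  map_smul' c w := by ext j; by_cases h : (j : ℕ) < k <;> simp [h]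

lemma extZ_pos {k n : ℕ} (w : Fin k → ℝ) (j : Fin n) (h : (j : ℕ) < k) : extZ k n w j = w ⟨j, h⟩ := by
  simp [extZ, h]

lemma extZ_neg {k n : ℕ} (w : Fin k → ℝ) (j : Fin n) (h : ¬ (j : ℕ) < k) : extZ k n w j = 0 := by
  simp [extZ, h]

lemma fold_sum (m N : ℕ) (h : 2 * m ≤ N) (g : ℕ → ℝ) (hg : ∀ i, 0 ≤ g i) :
    ∑ i : Fin m, (g i + g (N - 1 - i)) ≤ ∑ i ∈ Finset.range N, g i := by
  rw [Fin.sum_univ_eq_sum_range (fun i => g i + g (N - 1 - i)) m, Finset.sum_add_distrib]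
  have h1 : ∑ i ∈ Finset.range m, g (N - 1 - i) = ∑ i ∈ (Finset.range m).image (fun i => N - 1 - i), g i := by
    rw [Finset.sum_image]
    intro a ha b hb hab
    simp at ha hb hab
    omega
  rw [h1, ← Finset.sum_union]
  · refine Finset.sum_le_sum_of_subset_of_nonneg ?_ fun i _ _ => hg i
    intro k hk
    simp only [Finset.mem_union, Finset.mem_image, Finset.mem_range] at hk ⊢
    rcases hk with hk | ⟨a, ha, rfl⟩ <;> omega
  · rw [Finset.disjoint_left]
    intro k hk hk'
    simp only [Finset.mem_image, Finset.mem_range] at hk hk'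
    obtain ⟨a, ha, rfl⟩ := hk'
    omega

/-- `Sum.elim` of two linear maps -/
def elimL {M : Type*} [AddCommGroup M] [Module ℝ M] {n₁ n₂ : ℕ} (f : M →ₗ[ℝ] (Fin n₁ → ℝ))
    (g : M →ₗ[ℝ] (Fin n₂ → ℝ)) : M →ₗ[ℝ] (Fin n₁ ⊕ Fin n₂ → ℝ) where
  toFun w := Sum.elim (f w) (g w)
  map_add' w w' := by ext j; cases j <;> simp
  map_smul' c w := by ext j; cases j <;> simp

lemma elimL_inl {M : Type*} [AddCommGroup M] [Module ℝ M] {n₁ n₂ : ℕ} (f : M →ₗ[ℝ] (Fin n₁ → ℝ))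
    (g : M →ₗ[ℝ] (Fin n₂ → ℝ)) (w : M) : elimL f g w ∘ Sum.inl = f w := rfl

lemma elimL_inr {M : Type*} [AddCommGroup M] [Module ℝ M] {n₁ n₂ : ℕ} (f : M →ₗ[ℝ] (Fin n₁ → ℝ))
    (g : M →ₗ[ℝ] (Fin n₂ → ℝ)) (w : M) : elimL f g w ∘ Sum.inr = g w := rfl

lemma lower_space {n₁ n₂ : ℕ} (A : Matrix (Fin n₁) (Fin n₂) ℝ) (a : Fin (min n₁ n₂) → ℝ)
    (h : IsSVDVals A a) (i : ℕ) (hi : i < n₁ + n₂) :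
    ∃ W : Submodule ℝ (Fin n₁ ⊕ Fin n₂ → ℝ), i + 1 ≤ Module.finrank ℝ W ∧
      ∀ x ∈ W, (sv a i - sv a (n₁ + n₂ - 1 - i)) * (x ⬝ᵥ x) ≤ x ⬝ᵥ (dil A *ᵥ x) := by
  obtain ⟨hanti, ha, U, V, hU, hV, hA⟩ := h
  by_cases h1 : i < min n₁ n₂
  · have h2 : ¬ (n₁ + n₂ - 1 - i < min n₁ n₂) := by omega
    simp only [sv, h1, h2, dif_pos, dif_neg, not_false_iff, sub_zero]
    let G := elimL (U.mulVecLin ∘ₗ extZ (i+1) n₁) (V.mulVecLin ∘ₗ extZ (i+1) n₂)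
    have hGU : ∀ w, Uᵀ *ᵥ (G w ∘ Sum.inl) = extZ (i+1) n₁ w := by
      intro w
      simp [G, elimL_inl, hU]
    have hGV : ∀ w, Vᵀ *ᵥ (G w ∘ Sum.inr) = extZ (i+1) n₂ w := by
      intro w
      simp [G, elimL_inr, hV]
    have hinj : Function.Injective G := by
      intro w w' hww
      have := hGU w
      rw [hww, hGU] at this
      ext j
      have := congrFun this ⟨j, by omega⟩
      rw [extZ_pos (n := n₁) w' ⟨j, by omega⟩ j.2, extZ_pos (n := n₁) w ⟨j, by omega⟩ j.2] at this
      exact this.symm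
    refine ⟨LinearMap.range G, ?_, ?_⟩
    · rw [LinearMap.finrank_range_of_inj hinj]; simp
    · rintro _ ⟨w, rfl⟩
      rw [norm_sum, ← norm_orth U hU, ← norm_orth V hV, dil_quad, svd_bilin A a U V hA, hGU, hGV,
        ← sum_castLE_eq (min_le_left n₁ n₂), ← sum_castLE_eq (min_le_right n₁ n₂),
        ← Finset.sum_add_distrib, Finset.mul_sum, Finset.mul_sum]
      · refine Finset.sum_le_sum fun k _ => ?_
        by_cases hk : (k : ℕ) < i + 1
        · have hak : a ⟨i, h1⟩ ≤ a k := hanti (by rw [Fin.le_def]; simp; omega)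
          rw [extZ_pos _ _ (by simpa using hk), extZ_pos _ _ (by simpa using hk)]
          simp only [Fin.val_castLE]
          nlinarith [mul_le_mul_of_nonneg_right hak (sq_nonneg (w ⟨k, hk⟩))]
        · rw [extZ_neg _ _ (by simpa using hk), extZ_neg _ _ (by simpa using hk)]; simp
      · intro j hj
        have : ¬ (j : ℕ) < i + 1 := by omega
        rw [extZ_neg _ _ this]; simp
      · intro j hj
        have : ¬ (j : ℕ) < i + 1 := by omega
        rw [extZ_neg _ _ this]; simp
  · by_cases h2 : n₁ + n₂ - 1 - i < min n₁ n₂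
    · simp only [sv, h1, h2, dif_pos, dif_neg, not_false_iff, zero_sub]
      set k := n₁ + n₂ - 1 - i with hk
      let L : (Fin n₁ ⊕ Fin n₂ → ℝ) →ₗ[ℝ] (Fin k → ℝ) :=
        (LinearMap.funLeft ℝ ℝ (Fin.castLE (h2.le.trans (min_le_right _ _)))) ∘ₗ Vᵀ.mulVecLin ∘ₗ
          LinearMap.funLeft ℝ ℝ Sum.inr
      refine ⟨LinearMap.ker L, ?_, ?_⟩
      · have e1 := LinearMap.finrank_range_add_finrank_ker L
        have e2 := Submodule.finrank_le (LinearMap.range L)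
        simp only [Module.finrank_fintype_fun_eq_card, Fintype.card_sum, Fintype.card_fin] at e1 e2
        omega
      · intro x hx
        have hz : ∀ j : Fin (min n₁ n₂), (j : ℕ) < k →
            (Vᵀ *ᵥ (x ∘ Sum.inr)) (Fin.castLE (min_le_right _ _) j) = 0 := by
          intro j hj
          exact congrFun (LinearMap.mem_ker.mp hx) ⟨j, hj⟩
        rw [dil_quad, svd_bilin A a U V hA, neg_mul, neg_le, Finset.mul_sum, ← Finset.sum_neg_distrib]
        refine le_trans ?_ (mul_le_mul_of_nonneg_left (sum_le_norm U V hU hV x) (ha _))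
        rw [Finset.mul_sum]
        refine Finset.sum_le_sum fun j _ => ?_
        have h0 := ha ⟨k, h2⟩
        by_cases hj : (j : ℕ) < k
        · rw [hz j hj]
          simp only [mul_zero, neg_zero]
          positivity
        · have hak : a j ≤ a ⟨k, h2⟩ := hanti (by rw [Fin.le_def]; simp; omega)
          generalize (Uᵀ *ᵥ (x ∘ Sum.inl)) (Fin.castLE (min_le_left _ _) j) = p
          generalize (Vᵀ *ᵥ (x ∘ Sum.inr)) (Fin.castLE (min_le_right _ _) j) = q
          nlinarith [mul_nonneg (ha j) (sq_nonneg (p + q)),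
            mul_nonneg (sub_nonneg.2 hak) (add_nonneg (sq_nonneg p) (sq_nonneg q))]
    · simp only [sv, h1, h2, dif_neg, not_false_iff, sub_zero, zero_mul]
      rcases le_total n₁ n₂ with hn | hn
      · let G := elimL (0 : (Fin n₂ → ℝ) →ₗ[ℝ] (Fin n₁ → ℝ)) (LinearMap.id)
        have hinj : Function.Injective G := fun w w' hww => by
          have := congrArg (fun f => f ∘ Sum.inr) hww
          simpa [G, elimL_inr] using this
        refine ⟨LinearMap.range G, ?_, ?_⟩
        · rw [LinearMap.finrank_range_of_inj hinj]; simp; omega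
        · rintro _ ⟨w, rfl⟩
          rw [dil_quad]; simp [G, elimL_inl]
      · let G := elimL (LinearMap.id) (0 : (Fin n₁ → ℝ) →ₗ[ℝ] (Fin n₂ → ℝ))
        have hinj : Function.Injective G := fun w w' hww => by
          have := congrArg (fun f => f ∘ Sum.inl) hww
          simpa [G, elimL_inl] using this
        refine ⟨LinearMap.range G, ?_, ?_⟩
        · rw [LinearMap.finrank_range_of_inj hinj]; simp; omega
        · rintro _ ⟨w, rfl⟩
          rw [dil_quad]; simp [G, elimL_inr]

lemma lidskii {n₁ n₂ : ℕ} (A₁ A₂ B : Matrix (Fin n₁) (Fin n₂) ℝ) (a₁ a₂ b : Fin (min n₁ n₂) → ℝ)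
    (h₁ : IsSVDVals A₁ a₁) (h₂ : IsSVDVals A₂ a₂) (hB : IsSVDVals B b) (hAB : A₁ = A₂ + B)
    (t : ℝ) (ht : 0 ≤ t) :
    ∑ i, max (|a₁ i - a₂ i| - t) 0 ≤ ∑ j, max (b j - t) 0 := by
  obtain ⟨Q, hQ, htr, hQ0, hQB⟩ := majorant B b hB t ht
  set N := n₁ + n₂ with hN
  have hcard : Fintype.card (Fin n₁ ⊕ Fin n₂) = N := by simp [hN]
  let c₁ : ℕ → ℝ := fun i => sv a₁ i - sv a₁ (N - 1 - i)
  let c₂ : ℕ → ℝ := fun i => sv a₂ i - sv a₂ (N - 1 - i)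
  have key := trace_lower (dil A₂ + Q + t • (1 : Matrix _ _ ℝ))
    (((dil_herm A₂).add hQ).add (by simp [IsHermitian, conjTranspose_eq_transpose_of_trivial]))
    (fun i => max (c₁ i) (c₂ i + t)) (by
      intro i
      have hi : (i : ℕ) < n₁ + n₂ := by have := i.2; omega
      have hexp : ∀ x, x ⬝ᵥ ((dil A₂ + Q + t • (1 : Matrix _ _ ℝ)) *ᵥ x) =
          x ⬝ᵥ (dil A₂ *ᵥ x) + x ⬝ᵥ (Q *ᵥ x) + t * (x ⬝ᵥ x) := by
        intro x
        simp [add_mulVec, smul_mulVec, dotProduct_add]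
      rcases le_total (c₁ i) (c₂ i + t) with hc | hc
      · obtain ⟨W, hW, hx⟩ := lower_space A₂ a₂ h₂ i hi
        refine ⟨W, hW, fun x hxW => ?_⟩
        rw [hexp, max_eq_right hc]
        have := hx x hxW
        have := hQ0 x
        simp only [c₂]
        linarith
      · obtain ⟨W, hW, hx⟩ := lower_space A₁ a₁ h₁ i hi
        refine ⟨W, hW, fun x hxW => ?_⟩
        rw [hexp, max_eq_left hc]
        have h3 := hx x hxW
        have h4 := hQB x
        rw [dil_quad] at h3 h4 ⊢
        rw [hAB, add_mulVec, dotProduct_add] at h3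
        simp only [c₁]
        linarith)
  have htrace : (dil A₂ + Q + t • (1 : Matrix _ _ ℝ)).trace = ∑ j, max (b j - t) 0 + N * t := by
    rw [trace_add, trace_add, htr, trace_smul, trace_one, hcard]
    have h0 : (dil A₂).trace = 0 := by simp [dil, Matrix.trace]
    rw [h0, smul_eq_mul]
    ring
  rw [htrace, Fin.sum_univ_eq_sum_range (fun i => max (c₁ i) (c₂ i + t)), hcard] at key
  have hc2 : ∑ i ∈ Finset.range N, c₂ i = 0 := by
    simp only [c₂, Finset.sum_sub_distrib]
    rw [Finset.sum_range_reflect (sv a₂) N, sub_self]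
  have hkey : ∑ i ∈ Finset.range N, max (c₁ i - c₂ i - t) 0 ≤ ∑ j, max (b j - t) 0 := by
    have : ∀ i, max (c₁ i) (c₂ i + t) = max (c₁ i - c₂ i - t) 0 + (c₂ i + t) := by
      intro i
      rw [← max_add_add_right]
      congr 1 <;> ring
    simp only [this, Finset.sum_add_distrib, hc2] at key
    simp at key
    linarith
  refine le_trans ?_ hkey
  refine le_trans ?_ (fold_sum (min n₁ n₂) N (by omega) (fun i => max (c₁ i - c₂ i - t) 0)
    fun _ => le_max_right _ _)
  refine Finset.sum_le_sum fun i _ => ?_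
  have hs : ∀ a : Fin (min n₁ n₂) → ℝ, sv a (i : ℕ) = a i := fun a => dif_pos i.2
  have hs' : ∀ a : Fin (min n₁ n₂) → ℝ, sv a (N - 1 - (i : ℕ)) = 0 := fun a => dif_neg (by omega)
  have hr : N - 1 - (N - 1 - (i : ℕ)) = i := by omega
  simp only [c₁, c₂, hr, hs, hs']
  rcases abs_cases (a₁ i - a₂ i) with ⟨h, _⟩ | ⟨h, _⟩ <;> rw [h]
  · have := le_max_right (0 - a₁ i - (0 - a₂ i) - t) 0
    simp only [sub_zero]
    linarith
  · have := le_max_right (a₁ i - 0 - (a₂ i - 0) - t) 0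
    have e : -(a₁ i - a₂ i) - t = 0 - a₁ i - (0 - a₂ i) - t := by ring
    rw [e]
    linarith


lemma exists_svd {n₁ n₂ : ℕ} (H : Matrix (Fin n₁) (Fin n₂) ℝ) :
    ∃ σ : Fin (min n₁ n₂) → ℝ, IsSVDVals H σ := by
  let T : EuclideanSpace ℝ (Fin n₂) →ₗ[ℝ] EuclideanSpace ℝ (Fin n₁) := toEuclideanLin H
  have hn : Module.finrank ℝ (EuclideanSpace ℝ (Fin n₂)) = n₂ := finrank_euclideanSpace_fin
  let hS := T.isSymmetric_adjoint_comp_self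
  let v := hS.eigenvectorBasis hn
  have hin : ∀ i j, inner ℝ (T (v i)) (T (v j)) = if i = j then T.singularValues i ^ 2 else 0 := by
    intro i j
    rw [← LinearMap.adjoint_inner_left, ← LinearMap.comp_apply, hS.apply_eigenvectorBasis hn,
      T.sq_singularValues_fin hn, inner_smul_left, orthonormal_iff_ite.mp v.orthonormal]
    split_ifs <;> simp
  have hz : ∀ j : Fin n₂, n₁ ≤ (j : ℕ) → T.singularValues j = 0 := by
    intro j hj
    rw [T.singularValues_eq_zero_iff_le_finrank_range]
    refine le_trans (Submodule.finrank_le _) ?_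
    simpa using hj
  have hT0 : ∀ j : Fin n₂, T.singularValues j = 0 → T (v j) = 0 := by
    intro j hj
    have := hin j j
    rw [if_pos rfl, hj] at this
    simpa using this
  let s : Set (Fin n₁) := {i | (i : ℕ) < n₂ ∧ T.singularValues i ≠ 0}
  let u : Fin n₁ → EuclideanSpace ℝ (Fin n₁) := fun i =>
    if h : (i : ℕ) < n₂ then (T.singularValues i)⁻¹ • T (v ⟨i, h⟩) else 0
  have hu : Orthonormal ℝ (s.domRestrict u) := by
    rw [orthonormal_iff_ite]
    rintro ⟨i, hi, hi0⟩ ⟨j, hj, hj0⟩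
    simp only [Set.domRestrict_apply, u, hi, hj, dif_pos, inner_smul_left, inner_smul_right, hin,
      Fin.mk.injEq, Subtype.mk.injEq, Fin.val_inj]
    split_ifs with hij
    · subst hij
      simp
      field_simp
    · simp
  obtain ⟨b, hb⟩ := hu.exists_orthonormalBasis_extension_of_card_eq (by simp)
  have hVV : (Matrix.of fun i j => v j i : Matrix (Fin n₂) (Fin n₂) ℝ)ᵀ * (Matrix.of fun i j => v j i) = 1 := by
    ext i j
    have := orthonormal_iff_ite.mp v.orthonormal i j
    simp only [PiLp.inner_apply, RCLike.inner_apply, conj_trivial] at this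
    simp only [mul_apply, transpose_apply, of_apply, one_apply, ← this]
    exact Finset.sum_congr rfl fun _ _ => mul_comm _ _
  have hUU : (Matrix.of fun i j => b j i : Matrix (Fin n₁) (Fin n₁) ℝ)ᵀ * (Matrix.of fun i j => b j i) = 1 := by
    ext i j
    have := orthonormal_iff_ite.mp b.orthonormal i j
    simp only [PiLp.inner_apply, RCLike.inner_apply, conj_trivial] at this
    simp only [mul_apply, transpose_apply, of_apply, one_apply, ← this]
    exact Finset.sum_congr rfl fun _ _ => mul_comm _ _
  refine ⟨fun i => T.singularValues i, fun i j hij => T.singularValues_antitone hij,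
    fun i => T.singularValues_nonneg i, Matrix.of fun i j => b j i, Matrix.of fun i j => v j i,
    hUU, hVV, ?_⟩
  have hHV : H * (Matrix.of fun i j => v j i : Matrix (Fin n₂) (Fin n₂) ℝ) =
      (Matrix.of fun i j => b j i : Matrix (Fin n₁) (Fin n₁) ℝ) *
        diagRect (fun i : Fin (min n₁ n₂) => T.singularValues i) := by
    ext i j
    have hl : (H * (Matrix.of fun i j => v j i : Matrix (Fin n₂) (Fin n₂) ℝ)) i j = T (v j) i := by
      simp [T, mul_apply, mulVec, dotProduct, toLpLin_apply]
    rw [hl]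
    simp only [mul_apply, of_apply, diagRect]
    by_cases hj : (j : ℕ) < n₁
    · rw [Finset.sum_eq_single ⟨j, hj⟩]
      · simp only [dif_pos]
        by_cases h0 : T.singularValues j = 0
        · rw [hT0 j h0, h0]; simp
        · rw [hb ⟨j, hj⟩ ⟨j.2, h0⟩]
          simp [u]
          field_simp
      · intro k _ hk
        rw [dif_neg, mul_zero]
        intro h
        exact hk (Fin.ext h)
      · simp
    · rw [hT0 j (hz j (by omega)), Finset.sum_eq_zero]
      · simp
      · intro k _
        rw [dif_neg, mul_zero]
        have := k.2
        omega
  rw [← hHV, Matrix.mul_assoc, mul_eq_one_comm.mp hVV, Matrix.mul_one]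

lemma rank_vanish {n₁ n₂ r : ℕ} (X : Matrix (Fin n₁) (Fin n₂) ℝ) (hX : X.rank ≤ r)
    (σ : Fin (min n₁ n₂) → ℝ) (h : IsSVDVals X σ) (i : Fin (min n₁ n₂)) (hi : r ≤ (i : ℕ)) :
    σ i = 0 := by
  obtain ⟨hanti, hnn, U, V, hU, hV, hA⟩ := h
  by_contra h0
  have hpos : 0 < σ i := lt_of_le_of_ne (hnn i) (Ne.symm h0)
  have hD : diagRect σ = Uᵀ * X * V := by
    rw [hA, Matrix.mul_assoc, Matrix.mul_assoc, Matrix.mul_assoc, hV, Matrix.mul_one, ← Matrix.mul_assoc, hU, Matrix.one_mul]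
  have hDr : (diagRect σ).rank ≤ r := by
    rw [hD]
    exact (rank_mul_le_left _ _).trans ((rank_mul_le_right _ _).trans hX)
  let w : Fin ((i : ℕ) + 1) → ℝ := fun j => σ (Fin.castLE i.2 j)
  have hsub : (diagRect σ).submatrix (fun j : Fin ((i : ℕ) + 1) => Fin.castLE (le_trans i.2 (min_le_left _ _)) j)
      (fun j : Fin ((i : ℕ) + 1) => Fin.castLE (le_trans i.2 (min_le_right _ _)) j) = diagonal w := by
    ext a b
    by_cases hab : a = b
    · subst hab; simp [diagRect, w]; rfl
    · have : (a : ℕ) ≠ b := fun h => hab (Fin.ext h)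
      simp [diagRect, hab, this]
  have hw : ∀ j, w j ≠ 0 := fun j => by
    have : σ i ≤ w j := hanti (by rw [Fin.le_def]; simp; omega)
    exact (hpos.trans_le this).ne'
  have hle := rank_submatrix_le (diagRect σ) (fun j : Fin ((i : ℕ) + 1) => Fin.castLE (le_trans i.2 (min_le_left _ _)) j)
      (fun j : Fin ((i : ℕ) + 1) => Fin.castLE (le_trans i.2 (min_le_right _ _)) j)
  rw [hsub, rank_diagonal] at hle
  have : Fintype.card {j // w j ≠ 0} = (i : ℕ) + 1 := by
    rw [Fintype.card_of_subtype Finset.univ (by simpa using hw)]; simp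
  omega


lemma phi_lip (α x z : ℝ) (hα : 0 < α) (hz : 0 ≤ z) (hxz : z < x) :
    phi α x - phi α z < α * (x - z) := by
  have hx : 0 < x := hz.trans_lt hxz
  simp only [phi, abs_of_nonneg hz, abs_of_pos hx]
  have h1 : 0 < 1 + α * x := by positivity
  have h2 : 0 < 1 + α * z := by positivity
  have : α * x / (1 + α * x) - α * z / (1 + α * z) = α * (x - z) / ((1 + α * x) * (1 + α * z)) := by
    field_simp; ring
  rw [this]
  apply div_lt_self (mul_pos hα (by linarith))
  nlinarith [mul_pos hα hx, mul_nonneg hα.le hz, mul_nonneg (mul_pos hα hx).le (mul_nonneg hα.le hz)]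

lemma phi_mono (α x z : ℝ) (hα : 0 < α) (hx : 0 ≤ x) (hxz : x ≤ z) :
    phi α x ≤ phi α z := by
  have hz : 0 ≤ z := hx.trans hxz
  simp only [phi, abs_of_nonneg hz, abs_of_nonneg hx]
  rw [div_le_div_iff₀ (by positivity) (by positivity)]
  nlinarith [mul_le_mul_of_nonneg_left hxz hα.le]

theorem stmt4 {n₁ n₂ n₃ r : ℕ}
    (𝒜 : Matrix (Fin n₁) (Fin n₂) ℝ →ₗ[ℝ] (Fin n₃ → ℝ))
    (α β : ℝ) (hα : 0 < α) (hβ : 0 < β) (hr : r ≤ min n₁ n₂)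
    (hNSP : ∀ H : Matrix (Fin n₁) (Fin n₂) ℝ, 𝒜 H = 0 → H ≠ 0 →
      ∀ σH : Fin (min n₁ n₂) → ℝ, IsSVDVals H σH →
        (1 + β * α) * ∑ i ∈ Finset.univ.filter (fun i : Fin (min n₁ n₂) => (i : ℕ) < r), σH i
          ≤ ∑ i ∈ Finset.univ.filter (fun i : Fin (min n₁ n₂) => r ≤ (i : ℕ)), σH i)
    (X : Matrix (Fin n₁) (Fin n₂) ℝ) (hrank : X.rank ≤ r) :
    ∀ Z : Matrix (Fin n₁) (Fin n₂) ℝ, 𝒜 Z = 𝒜 X → Z ≠ X →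
      ∀ σX σZ : Fin (min n₁ n₂) → ℝ, IsSVDVals X σX → IsSVDVals Z σZ →
        (∑ i, σX i) + β * ∑ i, phi α (σX i) <
        (∑ i, σZ i) + β * ∑ i, phi α (σZ i) := by
  intro Z hAZ hZX x z hx hz
  set H := Z - X with hH
  have hH0 : H ≠ 0 := sub_ne_zero.mpr hZX
  obtain ⟨h, hh⟩ := exists_svd H
  have hns := hNSP H (by rw [hH, map_sub, hAZ, sub_self]) hH0 h hh
  have hx0 : ∀ i, 0 ≤ x i := hx.2.1
  have hz0 : ∀ i, 0 ≤ z i := hz.2.1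
  have hh0 : ∀ i, 0 ≤ h i := hh.2.1
  have hxr : ∀ i : Fin (min n₁ n₂), r ≤ (i : ℕ) → x i = 0 := rank_vanish X hrank x hx
  have hnh := neg_svd hh
  set R := Finset.univ.filter (fun i : Fin (min n₁ n₂) => (i : ℕ) < r) with hR
  set R' := Finset.univ.filter (fun i : Fin (min n₁ n₂) => r ≤ (i : ℕ)) with hR'
  have hsplit : ∀ f : Fin (min n₁ n₂) → ℝ, ∑ i, f i = ∑ i ∈ R, f i + ∑ i ∈ R', f i := by
    intro f
    rw [← Finset.sum_filter_add_sum_filter_not Finset.univ (fun i : Fin (min n₁ n₂) => (i : ℕ) < r)]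
    simp only [not_lt, hR, hR']
  have hne : ∃ i, h i ≠ 0 := by
    by_contra hcon
    push Not at hcon
    obtain ⟨-, -, U, V, -, -, hA⟩ := hh
    apply hH0
    rw [hA, show diagRect h = 0 by ext i j; simp [diagRect, hcon]]
    simp
  obtain ⟨i₀, hi₀⟩ := hne
  have hi₀ : 0 < h i₀ := lt_of_le_of_ne (hh0 i₀) (Ne.symm hi₀)
  have hnuc : ∑ i ∈ R, x i + ∑ i ∈ R', h i - ∑ i ∈ R, h i ≤ ∑ i, z i := by
    have := lidskii X (-H) Z x h z hx hnh hz (by rw [hH]; abel) 0 le_rfl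
    simp only [sub_zero] at this
    have e : ∑ j, max (z j) 0 = ∑ j, z j := Finset.sum_congr rfl fun j _ => max_eq_left (hz0 j)
    rw [e] at this
    refine le_trans ?_ this
    rw [hsplit, add_sub_right_comm, ← Finset.sum_sub_distrib]
    refine add_le_add (Finset.sum_le_sum fun i _ => (le_abs_self _).trans (le_max_left _ _))
      (Finset.sum_le_sum fun i hi => ?_)
    rw [hxr i (by simpa [hR'] using hi), zero_sub, abs_neg, abs_of_nonneg (hh0 i)]
    exact le_max_left _ _
  have hxs : ∑ i, x i = ∑ i ∈ R, x i := by
    rw [hsplit, Finset.sum_eq_zero (s := R'), add_zero]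
    intro i hi
    exact hxr i (by simpa [hR'] using hi)
  have hphi0 : ∀ t, 0 ≤ phi α t := fun t => by unfold phi; positivity
  have hpx : ∑ i, phi α (x i) = ∑ i ∈ R, phi α (x i) := by
    rw [hsplit, Finset.sum_eq_zero (s := R'), add_zero]
    intro i hi
    rw [hxr i (by simpa [hR'] using hi)]
    simp [phi]
  have hpz : ∑ i ∈ R, phi α (z i) ≤ ∑ i, phi α (z i) := by
    rw [hsplit]
    linarith [Finset.sum_nonneg (s := R') fun i _ => hphi0 (z i)]
  rcases Nat.eq_zero_or_pos r with hr0 | hrpos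
  · have hRe : R = ∅ := by simp [hR, hr0]
    have hRu : R' = Finset.univ := by simp [hR', hr0]
    rw [hRe, hRu] at hnuc
    rw [hxs, hpx, hRe]
    simp only [Finset.sum_empty, zero_add, sub_zero, mul_zero, add_zero] at hnuc ⊢
    have h1 : 0 < ∑ i, h i := Finset.sum_pos' (fun i _ => hh0 i) ⟨i₀, Finset.mem_univ _, hi₀⟩
    have h2 : 0 ≤ β * ∑ i, phi α (z i) := mul_nonneg hβ.le (Finset.sum_nonneg fun i _ => hphi0 _)
    linarith
  · have hC : 0 < ∑ i ∈ R, h i := by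
      refine Finset.sum_pos' (fun i _ => hh0 i) ⟨⟨0, by omega⟩, by simp [hR, hrpos], ?_⟩
      exact hi₀.trans_le (hh.1 (by rw [Fin.le_def]; simp))
    set I := R.filter (fun i => z i < x i) with hI
    have hlid : ∑ i ∈ I, (x i - z i) ≤ ∑ i ∈ R, h i := by
      let k : Fin (min n₁ n₂) := ⟨r - 1, by omega⟩
      have hk := lidskii X Z (-H) x z h hx hz hnh (by rw [hH]; abel) (h k) (hh0 k)
      have e : ∑ j, max (h j - h k) 0 = ∑ j ∈ R, (h j - h k) := by
        rw [hsplit, Finset.sum_eq_zero (s := R'), add_zero]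
        · refine Finset.sum_congr rfl fun j hj => max_eq_left (sub_nonneg.2 (hh.1 ?_))
          have : (j : ℕ) < r := by simpa [hR] using hj
          rw [Fin.le_def]; simp only [k]; omega
        · intro j hj
          have : r ≤ (j : ℕ) := by simpa [hR'] using hj
          refine max_eq_right (sub_nonpos.2 (hh.1 ?_))
          rw [Fin.le_def]; simp only [k]; omega
      rw [e] at hk
      have h1 : ∑ i ∈ I, (x i - z i - h k) ≤ ∑ i, max (|x i - z i| - h k) 0 := by
        refine le_trans (Finset.sum_le_sum fun i _ => ?_)
          (Finset.sum_le_univ_sum_of_nonneg fun i => le_max_right _ _)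
        exact le_trans (by linarith [le_abs_self (x i - z i)]) (le_max_left _ _)
      have h2 := h1.trans hk
      rw [Finset.sum_sub_distrib, Finset.sum_sub_distrib (s := R)] at h2
      simp only [Finset.sum_const, nsmul_eq_mul] at h2
      have hcard : (I.card : ℝ) ≤ R.card := by
        exact_mod_cast Finset.card_le_card (Finset.filter_subset _ _)
      have := mul_le_mul_of_nonneg_right hcard (hh0 k)
      linarith
    have hpen : ∑ i ∈ R, (phi α (x i) - phi α (z i)) < α * ∑ i ∈ R, h i := by
      have h1 : ∑ i ∈ R, (phi α (x i) - phi α (z i)) ≤ ∑ i ∈ I, (phi α (x i) - phi α (z i)) := by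
        rw [hI, Finset.sum_filter (s := R)]
        refine Finset.sum_le_sum fun i _ => ?_
        split_ifs with hlt
        · exact le_rfl
        · exact sub_nonpos.2 (phi_mono α _ _ hα (hx0 i) (not_lt.1 hlt))
      rcases I.eq_empty_or_nonempty with hIe | hIn
      · rw [hIe, Finset.sum_empty] at h1
        exact h1.trans_lt (mul_pos hα hC)
      · refine h1.trans_lt (lt_of_lt_of_le ?_ (mul_le_mul_of_nonneg_left hlid hα.le))
        rw [Finset.mul_sum]
        refine Finset.sum_lt_sum_of_nonempty hIn fun i hi => ?_
        exact phi_lip α _ _ hα (hz0 i) (Finset.mem_filter.1 hi).2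
    rw [Finset.sum_sub_distrib] at hpen
    rw [hxs, hpx]
    have h3 := mul_lt_mul_of_pos_left hpen hβ
    have h4 := mul_le_mul_of_nonneg_left hpz hβ.le
    nlinarith
end

section
/- Let 𝒜 : ℝ^{n₁×n₂} → ℝ^{n₃} be a linear map satisfying the rank restricted isometry property of order 2r with constant δ_{2r} < 1, and let m = min(n₁, n₂). Then every H in the null space of 𝒜 satisfies ∑_{i=1}^r σ_i(H) ≤ θ_{2r}·∑_{i=r+1}^m σ_i(H), where θ_{2r} = sqrt(4(1 + 5δ_{2r} − 4δ_{2r}²)/((1 − δ_{2r})(32 − 25δ_{2r}))). -/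
open Finset Matrix

lemma rank_diagRect_le {n₁ n₂ : ℕ} (x : Fin (min n₁ n₂) → ℝ) (S : Finset (Fin (min n₁ n₂)))
    (hx : ∀ j, j ∉ S → x j = 0) : (diagRect x : Matrix (Fin n₁) (Fin n₂) ℝ).rank ≤ S.card := by
  classical
  let y : Fin n₁ → ℝ := fun i => if h : (i : ℕ) < min n₁ n₂ then x ⟨i, h⟩ else 0
  have e : (diagRect x : Matrix (Fin n₁) (Fin n₂) ℝ) = Matrix.diagonal y * diagRect (fun _ => 1) := by
    ext i j
    refine Eq.trans ?_ (Matrix.diagonal_mul (d := y) (M := (diagRect (fun _ => 1) : Matrix (Fin n₁) (Fin n₂) ℝ)) i j).symm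
    simp only [diagRect, Matrix.of_apply, y]
    by_cases h : (i : ℕ) = j
    · have : (i : ℕ) < min n₁ n₂ := lt_min i.isLt (lt_of_eq_of_lt h j.isLt)
      rw [dif_pos h, dif_pos h, dif_pos this, mul_one]
    · simp [h]
  rw [e]
  refine (Matrix.rank_mul_le_left _ _).trans ?_
  rw [Matrix.rank_diagonal, Fintype.card_subtype]
  refine (Finset.card_le_card (t := S.image (fun j : Fin (min n₁ n₂) => (⟨j, lt_of_lt_of_le j.isLt (min_le_left _ _)⟩ : Fin n₁))) ?_).trans
    Finset.card_image_le
  intro i hi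
  simp only [mem_filter, mem_univ, true_and, y] at hi
  by_cases h : (i : ℕ) < min n₁ n₂
  · rw [dif_pos h] at hi
    rw [mem_image]
    refine ⟨⟨i, h⟩, ?_, by ext; rfl⟩
    by_contra hc
    exact hi (hx _ hc)
  · rw [dif_neg h] at hi; exact absurd rfl hi

lemma frob_sq {n₁ n₂ : ℕ} (X : Matrix (Fin n₁) (Fin n₂) ℝ) : frob X ^ 2 = (Xᵀ * X).trace := by
  have h : 0 ≤ ∑ i, ∑ j, (X i j) ^ 2 :=
    Finset.sum_nonneg fun i _ => Finset.sum_nonneg fun j _ => sq_nonneg _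
  refine (Real.sq_sqrt h).trans (Finset.sum_comm.trans ?_)
  simp [Matrix.trace, Matrix.mul_apply, sq]

lemma frob_diagRect {n₁ n₂ : ℕ} (x : Fin (min n₁ n₂) → ℝ) :
    frob (diagRect x : Matrix (Fin n₁) (Fin n₂) ℝ) ^ 2 = ∑ j, x j ^ 2 := by
  have h : 0 ≤ ∑ i, ∑ j, ((diagRect x : Matrix (Fin n₁) (Fin n₂) ℝ) i j) ^ 2 :=
    Finset.sum_nonneg fun i _ => Finset.sum_nonneg fun j _ => sq_nonneg _
  refine (Real.sq_sqrt h).trans ((Finset.sum_product' _ _ _).symm.trans ?_)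
  symm
  refine Finset.sum_of_injOn (fun k => ((⟨k, lt_of_lt_of_le k.isLt (min_le_left _ _)⟩ : Fin n₁),
    (⟨k, lt_of_lt_of_le k.isLt (min_le_right _ _)⟩ : Fin n₂))) ?_ ?_ ?_ ?_
  · intro a _ b _ hab
    simp only [Prod.mk.injEq, Fin.mk.injEq] at hab
    exact Fin.ext hab.1
  · intro a _; simp
  · rintro ⟨i, j⟩ _ hij
    simp only [diagRect, Matrix.of_apply]
    by_cases h : (i : ℕ) = j
    · exfalso
      apply hij
      refine ⟨⟨i, lt_min i.isLt (lt_of_eq_of_lt h j.isLt)⟩, by simp, ?_⟩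
      ext
      · rfl
      · exact h
    · simp [h]
  · intro k _
    simp [diagRect]

lemma frob_conj {n₁ n₂ : ℕ} (U : Matrix (Fin n₁) (Fin n₁) ℝ) (V : Matrix (Fin n₂) (Fin n₂) ℝ)
    (hU : Uᵀ * U = 1) (hV : Vᵀ * V = 1) (D : Matrix (Fin n₁) (Fin n₂) ℝ) :
    frob (U * D * Vᵀ) ^ 2 = frob D ^ 2 := by
  rw [frob_sq, frob_sq]
  have : (U * D * Vᵀ)ᵀ * (U * D * Vᵀ) = V * (Dᵀ * (Uᵀ * U) * D * Vᵀ) := by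
    simp only [Matrix.transpose_mul, Matrix.transpose_transpose, Matrix.mul_assoc]
  rw [this, hU, Matrix.trace_mul_comm, Matrix.mul_one, Matrix.mul_assoc _ Vᵀ V, hV, Matrix.mul_one]

/-- `x ↦ U diag(x) Vᵀ` as a linear map. -/
def conjMap {n₁ n₂ : ℕ} (U : Matrix (Fin n₁) (Fin n₁) ℝ) (V : Matrix (Fin n₂) (Fin n₂) ℝ) :
    (Fin (min n₁ n₂) → ℝ) →ₗ[ℝ] Matrix (Fin n₁) (Fin n₂) ℝ where
  toFun x := U * diagRect x * Vᵀ
  map_add' x y := by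
    rw [← Matrix.add_mul, ← Matrix.mul_add]
    congr 2
    ext i j
    simp only [diagRect, Matrix.of_apply, Matrix.add_apply]
    split_ifs <;> simp
  map_smul' c x := by
    rw [RingHom.id_apply, ← Matrix.smul_mul, ← Matrix.mul_smul]
    congr 2
    ext i j
    simp only [diagRect, Matrix.of_apply, Matrix.smul_apply]
    split_ifs <;> simp


/-- `p` is a convex combination of indicators of sets of size at most `k`. -/
def HypC {m : ℕ} (k : ℕ) (p : Fin m → ℝ) : Prop :=
  ∃ l : Finset (Fin m) → ℝ, (∀ S, 0 ≤ l S) ∧ ∑ S, l S = 1 ∧ (∀ S, l S ≠ 0 → S.card ≤ k) ∧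
    ∀ j, ∑ S, l S * (if j ∈ S then 1 else 0) = p j

lemma hypC_convex {m k : ℕ} {p q z : Fin m → ℝ} (hp : HypC k p) (hq : HypC k q)
    {s t : ℝ} (hs : 0 ≤ s) (ht : 0 ≤ t) (hst : s + t = 1)
    (hz : ∀ j, z j = s * p j + t * q j) : HypC k z := by
  obtain ⟨l, l0, l1, lk, lj⟩ := hp
  obtain ⟨l', l0', l1', lk', lj'⟩ := hq
  refine ⟨fun S => s * l S + t * l' S, fun S => ?_, ?_, ?_, ?_⟩
  · have := l0 S; have := l0' S; positivity
  · rw [Finset.sum_add_distrib, ← Finset.mul_sum, ← Finset.mul_sum, l1, l1']; linarith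
  · intro S hS
    by_cases h : l S = 0
    · by_cases h' : l' S = 0
      · simp [h, h'] at hS
      · exact lk' S h'
    · exact lk S h
  · intro j
    rw [hz, ← lj, ← lj', Finset.mul_sum, Finset.mul_sum, ← Finset.sum_add_distrib]
    exact Finset.sum_congr rfl fun S _ => by ring

lemma hypC_ind {m k : ℕ} (S : Finset (Fin m)) (hS : S.card ≤ k) :
    HypC k (fun j => if j ∈ S then 1 else 0) := by
  refine ⟨fun S' => if S' = S then 1 else 0, fun S' => ?_, ?_, ?_, ?_⟩
  · dsimp only; split_ifs <;> norm_num
  · simp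
  · intro S' h
    by_cases h' : S' = S
    · rwa [h']
    · simp [h'] at h
  · intro j; simp only [ite_mul, one_mul, zero_mul, Finset.sum_ite_eq', mem_univ, if_true]

lemma hyp_all {m k : ℕ} : ∀ (N : ℕ) (p : Fin m → ℝ),
    (univ.filter (fun j => p j ≠ 0 ∧ p j ≠ 1)).card ≤ N → (∀ j, 0 ≤ p j) → (∀ j, p j ≤ 1) →
    ∑ j, p j ≤ k → HypC k p := by
  intro N
  induction N with
  | zero =>
    intro p hN h0 h1 hs
    have hf : ∀ j, p j = if j ∈ univ.filter (fun j => p j = 1) then 1 else 0 := by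
      intro j
      have : j ∉ (univ.filter (fun j => p j ≠ 0 ∧ p j ≠ 1)) := by
        rw [Finset.card_eq_zero.mp (Nat.le_zero.mp hN)]; simp
      simp only [mem_filter, mem_univ, true_and, not_and_or, not_not] at this ⊢
      split_ifs with h
      · exact h
      · tauto
    rw [funext hf]
    apply hypC_ind
    rw [Finset.sum_congr rfl (fun j _ => hf j)] at hs
    simp only [Finset.sum_ite_mem, univ_inter, sum_const, nsmul_eq_mul, mul_one] at hs
    exact_mod_cast hs
  | succ N ih =>
    intro p hN h0 h1 hs
    set F := univ.filter (fun j => p j ≠ 0 ∧ p j ≠ 1) with hF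
    have memF : ∀ j, j ∈ F ↔ (p j ≠ 0 ∧ p j ≠ 1) := fun j => by simp [hF]
    by_cases hle : F.card ≤ N
    · exact ih p hle h0 h1 hs
    by_cases h2 : 1 < F.card
    · obtain ⟨i, hi, j, hj, hij⟩ := Finset.one_lt_card.mp h2
      have key : ∀ s : ℝ, ∀ i j : Fin m, i ∈ F → j ∈ F → i ≠ j → s = min (1 - p i) (p j) →
          HypC k (fun a => p a + s * ((if a = i then 1 else 0) - (if a = j then 1 else 0))) := by
        intro s i j hi hj hij hs'
        rw [memF] at hi hj
        have hs0 : 0 ≤ s := by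
          rw [hs']; exact le_min (by linarith [h1 i]) (h0 j)
        have hsi : s ≤ 1 - p i := hs' ▸ min_le_left _ _
        have hsj : s ≤ p j := hs' ▸ min_le_right _ _
        apply ih
        · have hss : (univ.filter (fun a => (p a + s * ((if a = i then 1 else 0) - (if a = j then 1 else 0))) ≠ 0 ∧
            (p a + s * ((if a = i then 1 else 0) - (if a = j then 1 else 0))) ≠ 1)) ⊂ F := by
            rw [Finset.ssubset_iff_of_subset]
            · rcases min_choice (1 - p i) (p j) with h | h
              · refine ⟨i, (memF i).2 hi, ?_⟩
                rw [h] at hs'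
                simp [hij, hs']
              · refine ⟨j, (memF j).2 hj, ?_⟩
                rw [h] at hs'
                simp [hij.symm, hs']
            · intro a ha
              rw [memF]
              by_cases hai : a = i
              · rwa [hai]
              by_cases haj : a = j
              · rwa [haj]
              simpa [hai, haj] using ha
          have := Finset.card_lt_card hss
          omega
        · intro a
          by_cases hai : a = i
          · subst hai; simp [hij]; linarith [h0 a]
          by_cases haj : a = j
          · subst haj; simp [hai]; linarith
          simp [hai, haj, h0]
        · intro a
          by_cases hai : a = i
          · subst hai; simp [hij]; linarith [h0 a]
          by_cases haj : a = j
          · subst haj; simp [hai]; linarith [h1 a]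
          simp [hai, haj, h1]
        · rw [Finset.sum_add_distrib, ← Finset.mul_sum, Finset.sum_sub_distrib]
          simpa using hs
      have k1 := key _ i j hi hj hij rfl
      have k2 := key _ j i hj hi hij.symm rfl
      have pos : ∀ i j, i ∈ F → j ∈ F → 0 < min (1 - p i) (p j) := by
        intro i j hi hj
        rw [memF] at hi hj
        exact lt_min (by linarith [lt_of_le_of_ne (h1 i) hi.2]) (lt_of_le_of_ne (h0 j) hj.1.symm)
      have p1 := pos i j hi hj
      have p2 := pos j i hj hi
      set s := min (1 - p i) (p j)
      set t := min (1 - p j) (p i)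
      refine hypC_convex k1 k2 (s := t / (s + t)) (t := s / (s + t)) (by positivity) (by positivity)
        (by field_simp; ring) ?_
      intro a
      field_simp
      ring
    · have h1c : F.card = 1 := by omega
      obtain ⟨i, hi⟩ := Finset.card_eq_one.mp h1c
      have hii : p i ≠ 0 ∧ p i ≠ 1 := (memF i).1 (by simp [hi])
      set S := univ.filter (fun j => p j = 1) with hS
      have hiS : i ∉ S := by simp [hS, hii.2]
      have hf : ∀ j, p j = (if j ∈ S then 1 else 0) + (if j = i then p i else 0) := by
        intro j
        by_cases hji : j = i
        · subst hji; simp [hiS]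
        · have : j ∉ F := by simp [hi, hji]
          rw [memF, not_and_or, not_not, not_not] at this
          rcases this with h | h <;> simp [hS, h, hji]
      have hc : S.card + 1 ≤ k := by
        rw [Finset.sum_congr rfl (fun j _ => hf j), Finset.sum_add_distrib] at hs
        simp only [Finset.sum_ite_mem, univ_inter, sum_const, nsmul_eq_mul, mul_one, Finset.sum_ite_eq', mem_univ, if_true] at hs
        have : (S.card : ℝ) < k := by linarith [lt_of_le_of_ne (h0 i) hii.1.symm]
        exact_mod_cast this
      refine hypC_convex (hypC_ind S (by omega)) (hypC_ind (insert i S) (by rw [card_insert_of_notMem hiS]; exact hc))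
        (s := 1 - p i) (t := p i) (by linarith [h1 i]) (h0 i) (by ring) ?_
      intro j
      by_cases hji : j = i
      · subst hji; simp [hiS]
      · rw [hf j]; simp [hji]; split_ifs <;> ring

/-- Sparse decomposition. -/
lemma decomp {m k : ℕ} (w : Fin m → ℝ) (h0 : ∀ j, 0 ≤ w j) (c : ℝ) (hc : 0 ≤ c)
    (hs : ∑ j, w j / max (w j) c ≤ k) :
    ∃ (l : Finset (Fin m) → ℝ) (u : Finset (Fin m) → Fin m → ℝ), (∀ S, 0 ≤ l S) ∧ ∑ S, l S = 1 ∧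
      (∀ S, l S ≠ 0 → S.card ≤ k) ∧ (∀ S j, j ∉ S → u S j = 0) ∧ (∀ S j, w j = 0 → u S j = 0) ∧
      (∑ S, l S • u S = w) ∧ ∑ S, l S * ∑ j, (u S j) ^ 2 = ∑ j, w j * max (w j) c := by
  have hM : ∀ j, 0 ≤ max (w j) c := fun j => le_max_of_le_right hc
  have hpi : ∀ j, w j / max (w j) c * max (w j) c = w j := by
    intro j
    by_cases h : max (w j) c = 0
    · have := le_max_left (w j) c
      rw [h, mul_zero]; linarith [h0 j]
    · field_simp
  obtain ⟨l, l0, l1, lk, lj⟩ := hyp_all _ (fun j => w j / max (w j) c) le_rfl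
    (fun j => div_nonneg (h0 j) (hM j)) (fun j => div_le_one_of_le₀ (le_max_left _ _) (hM j)) hs
  refine ⟨l, fun S j => (if j ∈ S then 1 else 0) * (if w j = 0 then 0 else max (w j) c),
    l0, l1, lk, ?_, ?_, ?_, ?_⟩
  · intro S j hj; simp [hj]
  · intro S j hj; simp [hj]
  · ext j
    rw [Finset.sum_apply]
    simp only [Pi.smul_apply, smul_eq_mul, ← mul_assoc]
    rw [← Finset.sum_mul, lj]
    by_cases hj : w j = 0
    · simp [hj]
    · rw [if_neg hj, hpi]
  · simp_rw [Finset.mul_sum]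
    rw [Finset.sum_comm]
    refine Finset.sum_congr rfl fun j _ => ?_
    by_cases hj : w j = 0
    · simp [hj]
    have : ∀ S : Finset (Fin m), l S * ((if j ∈ S then 1 else 0) * (if w j = 0 then 0 else max (w j) c)) ^ 2
        = (l S * (if j ∈ S then 1 else 0)) * (max (w j) c) ^ 2 := by
      intro S; rw [if_neg hj]; split_ifs <;> ring
    rw [Finset.sum_congr rfl fun S _ => this S, ← Finset.sum_mul, lj, sq, ← mul_assoc, hpi]

lemma stepA {E ι : Type*} [NormedAddCommGroup E] [InnerProductSpace ℝ E] [Fintype ι]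
    (l : ι → ℝ) (l0 : ∀ i, 0 ≤ l i) (l1 : ∑ i, l i = 1) (x : E) (u : ι → E) (y : ι → ℝ) (X δ : ℝ)
    (hδ : 0 ≤ δ) (hu : ∑ i, l i • u i = -x)
    (h : ∀ i, l i ≠ 0 → ∀ s t : ℝ, (1 - δ) * (s ^ 2 * X + t ^ 2 * y i) ≤ ‖s • x + t • u i‖ ^ 2 ∧
      ‖s • x + t • u i‖ ^ 2 ≤ (1 + δ) * (s ^ 2 * X + t ^ 2 * y i)) :
    (1 - δ ^ 2) * X ≤ δ ^ 2 * ∑ i, l i * y i := by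
  set q := ∑ i, l i * ‖u i‖ ^ 2 with hq
  set Y := ∑ i, l i * y i with hY
  have hin : ∑ i, l i * inner ℝ x (u i) = - ‖x‖ ^ 2 := by
    rw [← real_inner_self_eq_norm_sq, ← inner_neg_right, ← hu, inner_sum]
    simp_rw [inner_smul_right]
  have hsum : ∀ s t : ℝ, ∑ i, l i * ‖s • x + t • u i‖ ^ 2 = (s ^ 2 - 2 * s * t) * ‖x‖ ^ 2 + t ^ 2 * q := by
    intro s t
    have : ∀ i, l i * ‖s • x + t • u i‖ ^ 2 =
        l i * (s ^ 2 * ‖x‖ ^ 2) + 2 * s * t * (l i * inner ℝ x (u i)) + t ^ 2 * (l i * ‖u i‖ ^ 2) := by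
      intro i
      rw [norm_add_sq_real, norm_smul, norm_smul, inner_smul_left, inner_smul_right, mul_pow, mul_pow]
      simp
      ring
    rw [Finset.sum_congr rfl fun i _ => this i, Finset.sum_add_distrib, Finset.sum_add_distrib,
      ← Finset.sum_mul, ← Finset.mul_sum, ← Finset.mul_sum, hin, l1]
    ring
  have hsum2 : ∀ c s t : ℝ, ∑ i, l i * (c * (s ^ 2 * X + t ^ 2 * y i)) = c * (s ^ 2 * X + t ^ 2 * Y) := by
    intro c s t
    have : ∀ i, l i * (c * (s ^ 2 * X + t ^ 2 * y i)) = l i * (c * s ^ 2 * X) + (c * t ^ 2) * (l i * y i) := by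
      intro i; ring
    rw [Finset.sum_congr rfl fun i _ => this i, Finset.sum_add_distrib, ← Finset.sum_mul,
      ← Finset.mul_sum, l1]
    ring
  have lo : ∀ s t : ℝ, (1 - δ) * (s ^ 2 * X + t ^ 2 * Y) ≤ (s ^ 2 - 2 * s * t) * ‖x‖ ^ 2 + t ^ 2 * q := by
    intro s t
    rw [← hsum, ← hsum2]
    refine Finset.sum_le_sum fun i _ => ?_
    by_cases hi : l i = 0
    · simp [hi]
    · exact mul_le_mul_of_nonneg_left (h i hi s t).1 (l0 i)
  have hi : ∀ s t : ℝ, (s ^ 2 - 2 * s * t) * ‖x‖ ^ 2 + t ^ 2 * q ≤ (1 + δ) * (s ^ 2 * X + t ^ 2 * Y) := by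
    intro s t
    rw [← hsum, ← hsum2]
    refine Finset.sum_le_sum fun i _ => ?_
    by_cases hi : l i = 0
    · simp [hi]
    · exact mul_le_mul_of_nonneg_left (h i hi s t).2 (l0 i)
  rcases hδ.eq_or_lt with hδ0 | hδ0
  · subst hδ0
    have e1 := lo 1 0
    have e2 := hi 1 0
    have e3 := lo 0 1
    have e4 := hi 0 1
    have e5 := lo 1 1
    nlinarith
  have e1 := lo (1 + δ) δ
  have e2 := hi (1 - δ) (-δ)
  have : 0 ≤ (2 * δ) * (δ ^ 2 * Y - (1 - δ ^ 2) * X) := by nlinarith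
  have := nonneg_of_mul_nonneg_right this (by linarith)
  linarith

lemma stepB {E ι : Type*} [NormedAddCommGroup E] [InnerProductSpace ℝ E] [Fintype ι]
    (l : ι → ℝ) (l0 : ∀ i, 0 ≤ l i) (l1 : ∑ i, l i = 1) (u : ι → E) :
    ‖∑ i, l i • u i‖ ^ 2 ≤ ∑ i, l i * ‖u i‖ ^ 2 := by
  have h1 : ‖∑ i, l i • u i‖ ≤ ∑ i, l i * ‖u i‖ := by
    refine (norm_sum_le _ _).trans (le_of_eq ?_)
    refine Finset.sum_congr rfl fun i _ => ?_
    rw [norm_smul, Real.norm_of_nonneg (l0 i)]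
  refine (pow_le_pow_left₀ (norm_nonneg _) h1 2).trans ?_
  exact Real.pow_arith_mean_le_arith_mean_pow _ _ _ (fun i _ => l0 i) l1 (fun i _ => norm_nonneg _) 2

lemma poly1 (δ : ℝ) (hlo : 7 / 10 ≤ δ) (hhi : δ ≤ 82 / 100) : δ ^ 4 * (32 - 25 * δ) ≤ 4 * (1 + 5 * δ - 4 * δ ^ 2) * ((1 - δ) * (1 + δ) ^ 2) := by
  obtain ⟨t, ht⟩ : ∃ t, t = 82 / 100 - δ := ⟨_, rfl⟩
  have hd' : δ = 82 / 100 - t := by linarith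
  have t0 : 0 ≤ t := by linarith
  have t1 : t ≤ 12 / 100 := by linarith
  have t2 : t ^ 2 ≤ 12 / 100 * t := by nlinarith
  have t3 : t ^ 3 ≤ (12 / 100) * t ^ 2 := by nlinarith [sq_nonneg t]
  have t4 : t ^ 4 ≤ (12 / 100) * t ^ 3 := by nlinarith [pow_nonneg t0 3]
  have t5 : t ^ 5 ≤ (12 / 100) * t ^ 4 := by nlinarith [pow_nonneg t0 4]
  have := pow_nonneg t0 3
  have := pow_nonneg t0 4
  have := pow_nonneg t0 5
  rw [hd']
  ring_nf
  linarith

lemma poly2 (δ : ℝ) (hlo : 82 / 100 ≤ δ) (hhi : δ ≤ 9 / 10) : 4 / 9 * δ ^ 4 * (32 - 25 * δ) ≤ 4 * (1 + 5 * δ - 4 * δ ^ 2) * ((1 - δ) * (1 + δ) ^ 2) := by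
  obtain ⟨t, ht⟩ : ∃ t, t = 9 / 10 - δ := ⟨_, rfl⟩
  have hd' : δ = 9 / 10 - t := by linarith
  have t0 : 0 ≤ t := by linarith
  have t1 : t ≤ 12 / 100 := by linarith
  have t2 : t ^ 2 ≤ 12 / 100 * t := by nlinarith
  have t3 : t ^ 3 ≤ (12 / 100) * t ^ 2 := by nlinarith [sq_nonneg t]
  have t4 : t ^ 4 ≤ (12 / 100) * t ^ 3 := by nlinarith [pow_nonneg t0 3]
  have t5 : t ^ 5 ≤ (12 / 100) * t ^ 4 := by nlinarith [pow_nonneg t0 4]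
  have := pow_nonneg t0 3
  have := pow_nonneg t0 4
  have := pow_nonneg t0 5
  rw [hd']
  ring_nf
  linarith

lemma final_ineq (δ p τ a : ℝ) (h0 : 0 ≤ δ) (h1 : δ < 1) (hp : 0 ≤ p) (ht : 0 ≤ τ) (ha : 0 ≤ a)
    (hat : a ≤ τ) (A1 : p ≤ τ → (1 - δ ^ 2) * p ^ 2 ≤ δ ^ 2 * τ ^ 2)
    (A2 : τ ≤ p → (1 - δ ^ 2) * p ^ 2 ≤ δ ^ 2 * (a * p + (τ - a) * τ))
    (B : (1 - δ) * p ^ 2 ≤ (1 + δ) * (max a ((τ - a) / 2) * (τ - a))) :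
    (1 - δ) * (32 - 25 * δ) * p ^ 2 ≤ 4 * (1 + 5 * δ - 4 * δ ^ 2) * τ ^ 2 := by
  have hd : 0 < 1 - δ := by linarith
  rcases le_total p τ with hpt | hpt
  · by_cases hδ : δ ≤ 1 / 2
    · have := A1 hpt
      have h2 : δ ^ 2 * (32 - 25 * δ) ≤ 4 * (1 + 5 * δ - 4 * δ ^ 2) * (1 + δ) := by
        nlinarith [mul_nonneg h0 h0, mul_nonneg h0 (mul_nonneg h0 h0)]
      have h3 : (32 - 25 * δ) * ((1 - δ ^ 2) * p ^ 2) ≤ (32 - 25 * δ) * (δ ^ 2 * τ ^ 2) :=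
        mul_le_mul_of_nonneg_left this (by linarith)
      have h4 := mul_le_mul_of_nonneg_right h2 (sq_nonneg τ)
      have : 0 ≤ (1 + δ) * (4 * (1 + 5 * δ - 4 * δ ^ 2) * τ ^ 2 - (1 - δ) * (32 - 25 * δ) * p ^ 2) := by
        linarith
      have := nonneg_of_mul_nonneg_right this (by linarith)
      linarith
    · have h2 : (1 - δ) * (32 - 25 * δ) ≤ 4 * (1 + 5 * δ - 4 * δ ^ 2) := by nlinarith
      have h3 : p ^ 2 ≤ τ ^ 2 := pow_le_pow_left₀ hp hpt 2
      exact mul_le_mul h2 h3 (sq_nonneg _) (by nlinarith)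
  have A := A2 hpt
  by_cases hδ : δ ≤ 82 / 100
  · have hA : (1 - δ ^ 2) * p ^ 2 ≤ δ ^ 2 * (τ * p) := by
      refine A.trans (mul_le_mul_of_nonneg_left ?_ (sq_nonneg _))
      nlinarith
    rcases hp.eq_or_lt with hp0 | hp0
    · rw [← hp0]; have : 0 ≤ 4 * (1 + 5 * δ - 4 * δ ^ 2) := by nlinarith
      nlinarith [sq_nonneg τ]
    have hA' : (1 - δ ^ 2) * p ≤ δ ^ 2 * τ := by
      have : 0 ≤ p * (δ ^ 2 * τ - (1 - δ ^ 2) * p) := by nlinarith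
      have := nonneg_of_mul_nonneg_right this hp0
      linarith
    have hhalf : 1 ≤ 2 * δ ^ 2 := by
      by_contra! hh
      have : 0 < (1 - 2 * δ ^ 2) * p := by apply mul_pos <;> linarith
      nlinarith [mul_le_mul_of_nonneg_left hpt (sq_nonneg δ)]
    have h7 : 7 / 10 ≤ δ := by nlinarith
    have hsq := pow_le_pow_left₀ (by apply mul_nonneg _ hp; nlinarith) hA' 2
    have poly : δ ^ 4 * (32 - 25 * δ) ≤ 4 * (1 + 5 * δ - 4 * δ ^ 2) * ((1 - δ) * (1 + δ) ^ 2) := by exact poly1 δ h7 hδ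
    have h3 := mul_le_mul_of_nonneg_right poly (sq_nonneg τ)
    have h4 := mul_le_mul_of_nonneg_left hsq (show 0 ≤ 32 - 25 * δ by linarith)
    have : 0 ≤ ((1 - δ) * (1 + δ) ^ 2) * (4 * (1 + 5 * δ - 4 * δ ^ 2) * τ ^ 2 - (1 - δ) * (32 - 25 * δ) * p ^ 2) := by
      linarith
    have := nonneg_of_mul_nonneg_right this (by positivity)
    linarith
  have fromB : ∀ c : ℝ, max a ((τ - a) / 2) * (τ - a) ≤ c * τ ^ 2 →
      (1 + δ) * (32 - 25 * δ) * c ≤ 4 * (1 + 5 * δ - 4 * δ ^ 2) →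
      (1 - δ) * (32 - 25 * δ) * p ^ 2 ≤ 4 * (1 + 5 * δ - 4 * δ ^ 2) * τ ^ 2 := by
    intro c h1 h2
    have e1 := B.trans (mul_le_mul_of_nonneg_left h1 (by linarith))
    have e2 := mul_le_mul_of_nonneg_left e1 (show 0 ≤ 32 - 25 * δ by linarith)
    have e3 := mul_le_mul_of_nonneg_right h2 (sq_nonneg τ)
    linarith
  by_cases hδ2 : 9 / 10 ≤ δ
  · refine fromB (1 / 2) ?_ (by nlinarith)
    rcases max_choice a ((τ - a) / 2) with h | h <;> rw [h]
    · nlinarith [sq_nonneg (2 * a - τ), sq_nonneg τ]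
    · nlinarith
  push Not at hδ hδ2
  by_cases ha3 : τ ≤ 3 * a
  · refine fromB (1 / 4) ?_ (by nlinarith)
    rw [max_eq_left (by linarith)]
    nlinarith [sq_nonneg (2 * a - τ)]
  push Not at ha3
  have hth : 4 * ((1 - δ) * (32 - 25 * δ)) ≤ 4 * (1 + 5 * δ - 4 * δ ^ 2) := by nlinarith
  have hpos : 0 ≤ (1 - δ) * (32 - 25 * δ) := mul_nonneg hd.le (by linarith)
  by_cases hp2 : p ≤ 2 * τ
  · have : p ^ 2 ≤ 4 * τ ^ 2 := by nlinarith
    have e1 := mul_le_mul_of_nonneg_left this hpos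
    have e2 := mul_le_mul_of_nonneg_right hth (sq_nonneg τ)
    linarith
  push Not at hp2
  have hp0 : 0 < p := by linarith
  have hA : (1 - δ ^ 2) * p ^ 2 ≤ δ ^ 2 * (2 / 3 * τ * p) := by
    refine A.trans (mul_le_mul_of_nonneg_left ?_ (sq_nonneg _))
    nlinarith
  have hA' : (1 - δ ^ 2) * p ≤ δ ^ 2 * (2 / 3 * τ) := by
    have : 0 ≤ p * (δ ^ 2 * (2 / 3 * τ) - (1 - δ ^ 2) * p) := by nlinarith
    have := nonneg_of_mul_nonneg_right this hp0
    linarith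
  have hsq := pow_le_pow_left₀ (by apply mul_nonneg _ hp; nlinarith) hA' 2
  have poly : 4 / 9 * δ ^ 4 * (32 - 25 * δ) ≤ 4 * (1 + 5 * δ - 4 * δ ^ 2) * ((1 - δ) * (1 + δ) ^ 2) := by exact poly2 δ hδ.le hδ2.le
  have h3 := mul_le_mul_of_nonneg_right poly (sq_nonneg τ)
  have h4 := mul_le_mul_of_nonneg_left hsq (show 0 ≤ 32 - 25 * δ by linarith)
  have : 0 ≤ ((1 - δ) * (1 + δ) ^ 2) * (4 * (1 + 5 * δ - 4 * δ ^ 2) * τ ^ 2 - (1 - δ) * (32 - 25 * δ) * p ^ 2) := by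
    linarith
  have := nonneg_of_mul_nonneg_right this (by positivity)
  linarith

lemma vec_thm {E : Type*} [NormedAddCommGroup E] [InnerProductSpace ℝ E] {m r : ℕ} (hr : 0 < r)
    (B : (Fin m → ℝ) →ₗ[ℝ] E) (δ : ℝ) (h0 : 0 ≤ δ) (h1 : δ < 1)
    (hB : ∀ S : Finset (Fin m), S.card ≤ 2 * r → ∀ x : Fin m → ℝ, (∀ j, j ∉ S → x j = 0) →
      (1 - δ) * ∑ j, x j ^ 2 ≤ ‖B x‖ ^ 2 ∧ ‖B x‖ ^ 2 ≤ (1 + δ) * ∑ j, x j ^ 2)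
    (h : Fin m → ℝ) (hanti : Antitone h) (hnn : ∀ i, 0 ≤ h i) (hh : B h = 0) :
    (1 - δ) * (32 - 25 * δ) * (∑ i ∈ univ.filter (fun i : Fin m => (i : ℕ) < r), h i) ^ 2 ≤
      4 * (1 + 5 * δ - 4 * δ ^ 2) * (∑ i ∈ univ.filter (fun i : Fin m => r ≤ (i : ℕ)), h i) ^ 2 := by
  have hr' : (0 : ℝ) < r := by exact_mod_cast hr
  set T0 := univ.filter (fun i : Fin m => (i : ℕ) < r) with hT0
  set Tc := univ.filter (fun i : Fin m => r ≤ (i : ℕ)) with hTc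
  set T1 := univ.filter (fun i : Fin m => r ≤ (i : ℕ) ∧ (i : ℕ) < 2 * r) with hT1
  set T2 := univ.filter (fun i : Fin m => 2 * r ≤ (i : ℕ)) with hT2
  set T01 := univ.filter (fun i : Fin m => (i : ℕ) < 2 * r) with hT01
  have cardlt : ∀ a b : ℕ, (univ.filter (fun i : Fin m => a ≤ (i : ℕ) ∧ (i : ℕ) < b)).card ≤ b - a := by
    intro a b
    rw [← Nat.card_Ico]
    refine Finset.card_le_card_of_injOn (fun i => (i : ℕ)) ?_ (fun i _ j _ h => Fin.ext h)
    intro i hi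
    simpa using hi
  have cardeq : ∀ a b : ℕ, b ≤ m → (univ.filter (fun i : Fin m => a ≤ (i : ℕ) ∧ (i : ℕ) < b)).card = b - a := by
    intro a b hb
    refine le_antisymm (cardlt a b) ?_
    rw [← Nat.card_Ico]
    refine Finset.card_le_card_of_surjOn (fun i => (i : ℕ)) ?_
    intro i hi
    simp only [coe_Ico, Set.mem_Ico] at hi
    exact ⟨⟨i, by omega⟩, by simpa using hi, rfl⟩
  have c0 : T0.card ≤ r := by simpa using cardlt 0 r
  have c01 : T01.card ≤ 2 * r := by simpa using cardlt 0 (2 * r)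
  obtain ⟨p, hp⟩ : ∃ p, p = (∑ i ∈ T0, h i) / r := ⟨_, rfl⟩
  obtain ⟨τ, hτ⟩ : ∃ p, p = (∑ i ∈ Tc, h i) / r := ⟨_, rfl⟩
  obtain ⟨a, ha⟩ : ∃ p, p = (∑ i ∈ T1, h i) / r := ⟨_, rfl⟩
  have hp' : ∑ i ∈ T0, h i = r * p := by rw [hp]; field_simp
  have hτ' : ∑ i ∈ Tc, h i = r * τ := by rw [hτ]; field_simp
  have ha' : ∑ i ∈ T1, h i = r * a := by rw [ha]; field_simp
  have hsplit : ∑ i ∈ T1, h i + ∑ i ∈ T2, h i = ∑ i ∈ Tc, h i := by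
    rw [← Finset.sum_union]
    · congr 1
      ext i; simp [hT1, hT2, hTc]; omega
    · rw [Finset.disjoint_left]; intro i; simp [hT1, hT2]
  have h2' : ∑ i ∈ T2, h i = r * (τ - a) := by linarith
  have hp0 : 0 ≤ p := by rw [hp]; exact div_nonneg (Finset.sum_nonneg fun i _ => hnn i) hr'.le
  have hτ0 : 0 ≤ τ := by rw [hτ]; exact div_nonneg (Finset.sum_nonneg fun i _ => hnn i) hr'.le
  have ha0 : 0 ≤ a := by rw [ha]; exact div_nonneg (Finset.sum_nonneg fun i _ => hnn i) hr'.le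
  have haτ : a ≤ τ := by
    have : 0 ≤ r * (τ - a) := h2' ▸ Finset.sum_nonneg fun i _ => hnn i
    have := nonneg_of_mul_nonneg_right this hr'
    linarith
  have bp : ∀ j ∈ Tc, h j ≤ p := by
    intro j hj
    simp only [hTc, mem_filter, mem_univ, true_and] at hj
    have hc : T0.card = r := by simpa using cardeq 0 r (by omega)
    have : T0.card • h j ≤ ∑ i ∈ T0, h i := by
      refine Finset.card_nsmul_le_sum _ _ _ fun i hi => hanti ?_
      simp only [hT0, mem_filter, mem_univ, true_and] at hi
      exact Fin.le_def.2 (by omega)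
    rw [hc, hp', nsmul_eq_mul] at this
    exact le_of_mul_le_mul_left this hr'
  have ba : ∀ j ∈ T2, h j ≤ a := by
    intro j hj
    simp only [hT2, mem_filter, mem_univ, true_and] at hj
    have hc : T1.card = r := by
      have := cardeq r (2 * r) (by omega)
      rw [hT1, this]; omega
    have : T1.card • h j ≤ ∑ i ∈ T1, h i := by
      refine Finset.card_nsmul_le_sum _ _ _ fun i hi => hanti ?_
      simp only [hT1, mem_filter, mem_univ, true_and] at hi
      exact Fin.le_def.2 (by omega)
    rw [hc, ha', nsmul_eq_mul] at this
    exact le_of_mul_le_mul_left this hr'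
  let R : Finset (Fin m) → Fin m → ℝ := fun S j => if j ∈ S then h j else 0
  have Rnn : ∀ S j, 0 ≤ R S j := by
    intro S j; simp only [R]; split_ifs
    · exact hnn j
    · exact le_rfl
  have Rsum : ∀ S, ∑ j, R S j = ∑ j ∈ S, h j := by intro S; simp [R]
  have Xlow : r * p ^ 2 ≤ ∑ j ∈ T0, h j ^ 2 := by
    have e1 := sq_sum_le_card_mul_sum_sq (s := T0) (f := h)
    rw [hp'] at e1
    have e2 : (T0.card : ℝ) * ∑ j ∈ T0, h j ^ 2 ≤ r * ∑ j ∈ T0, h j ^ 2 :=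
      mul_le_mul_of_nonneg_right (by exact_mod_cast c0) (Finset.sum_nonneg fun i _ => sq_nonneg _)
    have : (r : ℝ) * (r * p ^ 2) ≤ r * ∑ j ∈ T0, h j ^ 2 := by nlinarith
    exact le_of_mul_le_mul_left this hr'
  have Rsq : ∀ S, ∑ j, R S j ^ 2 = ∑ j ∈ S, h j ^ 2 := by intro S; simp [R, ite_pow]
  have hAmain : (1 - δ ^ 2) * (r * p ^ 2) ≤ δ ^ 2 * ∑ j, R Tc j * max (R Tc j) τ := by
    obtain ⟨l, u, l0, l1, lk, lu, lz, lw, ly⟩ := decomp (k := r) (R Tc) (Rnn Tc) τ hτ0 (by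
      rcases hτ0.eq_or_lt with hz | hz
      · have : ∀ j, R Tc j = 0 := by
          have hs : ∑ j, R Tc j = 0 := by rw [Rsum, hτ', ← hz, mul_zero]
          intro j
          exact (Finset.sum_eq_zero_iff_of_nonneg fun j _ => Rnn Tc j).1 hs j (mem_univ j)
        simp [this]
      · calc ∑ j, R Tc j / max (R Tc j) τ ≤ ∑ j, R Tc j / τ :=
              Finset.sum_le_sum fun j _ => div_le_div_of_nonneg_left (Rnn Tc j) hz (le_max_right _ _)
          _ = r := by rw [← Finset.sum_div, Rsum, hτ']; field_simp
          _ ≤ r := le_rfl)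
    have key := stepA l l0 l1 (B (R T0)) (fun S => B (u S)) (fun S => ∑ j, u S j ^ 2)
      (∑ j, R T0 j ^ 2) δ h0 (by
        have : ∑ S, l S • B (u S) = B (R Tc) := by
          rw [← lw, map_sum]; simp_rw [map_smul]
        rw [this, eq_neg_iff_add_eq_zero, ← map_add, ← hh]
        congr 1
        ext j
        by_cases hj : j ∈ T0
        · have hj2 : j ∉ Tc := by simp [hT0, hTc] at hj ⊢; omega
          simp [R, hj, hj2]
        · have hj2 : j ∈ Tc := by simp [hT0, hTc] at hj ⊢; omega
          simp [R, hj, hj2]) (by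
        intro S hS s t
        have := hB (T0 ∪ S) ((card_union_le _ _).trans (by have := lk S hS; omega))
          (s • R T0 + t • u S) (by
            intro j hj
            rw [mem_union, not_or] at hj
            simp [R, hj.1, lu S j hj.2])
        have e : ∑ j, (s • R T0 + t • u S) j ^ 2 = s ^ 2 * ∑ j, R T0 j ^ 2 + t ^ 2 * ∑ j, u S j ^ 2 := by
          rw [Finset.mul_sum, Finset.mul_sum, ← Finset.sum_add_distrib]
          refine Finset.sum_congr rfl fun j _ => ?_
          by_cases hj : j ∈ T0
          · have hj2 : j ∉ Tc := by simp [hT0, hTc] at hj ⊢; omega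
            have : u S j = 0 := lz S j (by simp [R, hj2])
            simp [this, mul_pow]
          · have : R T0 j = 0 := by simp [R, hj]
            simp [this, mul_pow]
        rw [e, map_add, map_smul, map_smul] at this
        exact this)
    rw [ly, Rsq] at key
    refine le_trans (mul_le_mul_of_nonneg_left Xlow ?_) key
    nlinarith
  have A1 : p ≤ τ → (1 - δ ^ 2) * p ^ 2 ≤ δ ^ 2 * τ ^ 2 := by
    intro hpt
    have : ∑ j, R Tc j * max (R Tc j) τ = r * τ * τ := by
      rw [← hτ', ← Rsum, Finset.sum_mul]
      refine Finset.sum_congr rfl fun j _ => ?_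
      by_cases hj : j ∈ Tc
      · rw [max_eq_right]
        simp only [R, hj, if_true]; exact (bp j hj).trans hpt
      · simp [R, hj]
    rw [this] at hAmain
    have : (r : ℝ) * ((1 - δ ^ 2) * p ^ 2) ≤ r * (δ ^ 2 * τ ^ 2) := by linarith
    exact le_of_mul_le_mul_left this hr'
  have A2 : τ ≤ p → (1 - δ ^ 2) * p ^ 2 ≤ δ ^ 2 * (a * p + (τ - a) * τ) := by
    intro hpt
    have : ∑ j, R Tc j * max (R Tc j) τ ≤ r * (a * p + (τ - a) * τ) := by
      have e : ∀ j, R Tc j * max (R Tc j) τ ≤ R T1 j * p + R T2 j * τ := by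
        intro j
        by_cases hj : j ∈ Tc
        · by_cases hj2 : j ∈ T2
          · have hj1 : j ∉ T1 := by simp [hT1, hT2] at hj2 ⊢; omega
            simp only [R, hj, hj1, hj2, if_true, if_false]
            rw [max_eq_right ((ba j hj2).trans haτ)]; linarith
          · have hj1 : j ∈ T1 := by simp [hT1, hT2, hTc] at hj hj2 ⊢; omega
            simp only [R, hj, hj1, hj2, if_true, if_false]
            have := mul_le_mul_of_nonneg_left (max_le (bp j hj) hpt) (hnn j)
            linarith
        · have hj1 : j ∉ T1 := by simp [hT1, hTc] at hj ⊢; omega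
          have hj2 : j ∉ T2 := by simp [hT2, hTc] at hj ⊢; omega
          simp [R, hj, hj1, hj2]
      refine (Finset.sum_le_sum fun j _ => e j).trans ?_
      rw [Finset.sum_add_distrib, ← Finset.sum_mul, ← Finset.sum_mul, Rsum, Rsum, ha', h2']
      linarith
    have := hAmain.trans (mul_le_mul_of_nonneg_left this (sq_nonneg δ))
    have : (r : ℝ) * ((1 - δ ^ 2) * p ^ 2) ≤ r * (δ ^ 2 * (a * p + (τ - a) * τ)) := by linarith
    exact le_of_mul_le_mul_left this hr'
  have hBB : (1 - δ) * p ^ 2 ≤ (1 + δ) * (max a ((τ - a) / 2) * (τ - a)) := by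
    obtain ⟨c, hc⟩ : ∃ c, c = max a ((τ - a) / 2) := ⟨_, rfl⟩
    rw [← hc]
    have hca : a ≤ c := hc ▸ le_max_left _ _
    have hct : τ - a ≤ 2 * c := by
      have : (τ - a) / 2 ≤ c := hc ▸ le_max_right _ _
      linarith
    have hc0 : 0 ≤ c := ha0.trans hca
    have hmax : ∀ j, max (R T2 j) c = c := by
      intro j
      rw [max_eq_right]
      by_cases hj : j ∈ T2
      · simp only [R, hj, if_true]; exact (ba j hj).trans hca
      · simpa [R, hj] using hc0
    obtain ⟨l, u, l0, l1, lk, lu, lz, lw, ly⟩ := decomp (k := 2 * r) (R T2) (Rnn T2) c hc0 (by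
      simp_rw [hmax]
      rw [← Finset.sum_div, Rsum, h2']
      refine div_le_of_le_mul₀ hc0 (by positivity) ?_
      push_cast
      nlinarith)
    simp_rw [hmax] at ly
    rw [← Finset.sum_mul, Rsum, h2'] at ly
    have e1 := (hB T01 c01 (R T01) (fun j hj => by simp [R, hj])).1
    have e2 : B (R T01) = - B (R T2) := by
      rw [eq_neg_iff_add_eq_zero, ← map_add, ← hh]
      congr 1
      ext j
      by_cases hj : j ∈ T01
      · have hj2 : j ∉ T2 := by simp [hT01, hT2] at hj ⊢; omega
        simp [R, hj, hj2]
      · have hj2 : j ∈ T2 := by simp [hT01, hT2] at hj ⊢; omega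
        simp [R, hj, hj2]
    rw [e2, norm_neg, Rsq] at e1
    have e3 : ∑ j ∈ T0, h j ^ 2 ≤ ∑ j ∈ T01, h j ^ 2 :=
      Finset.sum_le_sum_of_subset_of_nonneg (fun j hj => by simp [hT0, hT01] at hj ⊢; omega)
        fun _ _ _ => sq_nonneg _
    have e4 : ‖B (R T2)‖ ^ 2 ≤ ∑ S, l S * ‖B (u S)‖ ^ 2 := by
      rw [← lw, map_sum]
      simp_rw [map_smul]
      exact stepB l l0 l1 _
    have e5 : ∑ S, l S * ‖B (u S)‖ ^ 2 ≤ (1 + δ) * ∑ S, l S * ∑ j, u S j ^ 2 := by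
      rw [Finset.mul_sum]
      refine Finset.sum_le_sum fun S _ => ?_
      by_cases hS : l S = 0
      · simp [hS]
      · have := mul_le_mul_of_nonneg_left (hB S (lk S hS) (u S) (lu S)).2 (l0 S)
        linarith
    rw [ly] at e5
    have e6 := mul_le_mul_of_nonneg_left (Xlow.trans e3) (show 0 ≤ 1 - δ by linarith)
    have : (r : ℝ) * ((1 - δ) * p ^ 2) ≤ r * ((1 + δ) * (c * (τ - a))) := by linarith
    exact le_of_mul_le_mul_left this hr'
  have := final_ineq δ p τ a h0 h1 hp0 hτ0 ha0 haτ A1 A2 hBB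
  rw [hp', hτ', mul_pow, mul_pow]
  have := mul_le_mul_of_nonneg_left this (sq_nonneg (r : ℝ))
  linarith

theorem stmt8 {n₁ n₂ n₃ r : ℕ}
    (𝒜 : Matrix (Fin n₁) (Fin n₂) ℝ →ₗ[ℝ] (Fin n₃ → ℝ)) (δ : ℝ)
    (hRIP : RankRIP 𝒜 (2 * r) δ) :
    ∀ H : Matrix (Fin n₁) (Fin n₂) ℝ, 𝒜 H = 0 →
      ∀ σH : Fin (min n₁ n₂) → ℝ, IsSVDVals H σH →
        ∑ i ∈ Finset.univ.filter (fun i : Fin (min n₁ n₂) => (i : ℕ) < r), σH i ≤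
          Real.sqrt (4 * (1 + 5 * δ - 4 * δ ^ 2) / ((1 - δ) * (32 - 25 * δ))) *
            ∑ i ∈ Finset.univ.filter (fun i : Fin (min n₁ n₂) => r ≤ (i : ℕ)), σH i := by
  obtain ⟨h0, h1, hA⟩ := hRIP
  rintro H hH σ ⟨hanti, hnn, U, V, hU, hV, hX⟩
  have hTn : 0 ≤ ∑ i ∈ Finset.univ.filter (fun i : Fin (min n₁ n₂) => r ≤ (i : ℕ)), σ i :=
    Finset.sum_nonneg fun i _ => hnn i
  rcases Nat.eq_zero_or_pos r with hr | hr
  · subst hr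
    simp only [Nat.not_lt_zero, Finset.filter_false, Finset.sum_empty]
    exact mul_nonneg (Real.sqrt_nonneg _) hTn
  have l2n : ∀ y : Fin n₃ → ℝ, l2 y ^ 2 = ‖(WithLp.toLp 2 y : EuclideanSpace ℝ (Fin n₃))‖ ^ 2 := by
    intro y
    rw [l2, Real.sq_sqrt (Finset.sum_nonneg fun i _ => sq_nonneg _), EuclideanSpace.real_norm_sq_eq]
  obtain ⟨L, hL⟩ : ∃ L : (Fin (min n₁ n₂) → ℝ) →ₗ[ℝ] EuclideanSpace ℝ (Fin n₃),
      ∀ x, L x = WithLp.toLp 2 (𝒜 (conjMap U V x)) :=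
    ⟨(WithLp.linearEquiv 2 ℝ (Fin n₃ → ℝ)).symm.toLinearMap ∘ₗ 𝒜 ∘ₗ conjMap U V, fun x => rfl⟩
  have main := vec_thm hr
    L δ h0 h1
    (by
      intro S hS x hx
      have := hA (conjMap U V x) (by
        have e1 : conjMap U V x = U * diagRect x * Vᵀ := rfl
        rw [e1]
        refine (Matrix.rank_mul_le_left (U * diagRect x) Vᵀ).trans
          ((Matrix.rank_mul_le_right U (diagRect x)).trans ?_)
        exact (rank_diagRect_le x S hx).trans hS)
      rw [l2n] at this
      have e : frob (conjMap U V x) ^ 2 = ∑ j, x j ^ 2 := by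
        rw [← frob_diagRect]; exact frob_conj U V hU hV _
      rw [e] at this
      rw [hL]
      exact this)
    σ hanti hnn (by
      have : conjMap U V σ = H := hX.symm
      rw [hL, this, hH]; rfl)
  have hden : 0 < (1 - δ) * (32 - 25 * δ) := mul_pos (by linarith) (by linarith)
  refine abs_le_of_sq_le_sq' ?_ (mul_nonneg (Real.sqrt_nonneg _) hTn) |>.2
  rw [mul_pow, Real.sq_sqrt (div_nonneg (by nlinarith) hden.le), div_mul_eq_mul_div, le_div_iff₀ hden]
  linarith
end

section
/- For every 0 ≤ δ ≤ 0.4663, the quantity θ(δ) = sqrt(4(1 + 5δ − 4δ²)/((1 − δ)(32 − 25δ))) satisfies 1/θ(δ) − 1 ≥ 0.05; equivalently, θ(δ) ≤ 20/21. -/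
theorem stmt9 (δ : ℝ) (h0 : 0 ≤ δ) (h1 : δ ≤ 0.4663) :
    1 / Real.sqrt (4 * (1 + 5 * δ - 4 * δ ^ 2) / ((1 - δ) * (32 - 25 * δ))) - 1 ≥ 0.05 ∧
    Real.sqrt (4 * (1 + 5 * δ - 4 * δ ^ 2) / ((1 - δ) * (32 - 25 * δ))) ≤ 20 / 21 := by
  norm_num at h1
  have hd : 0 < (1 - δ) * (32 - 25 * δ) := mul_pos (by linarith) (by linarith)
  have hn : 0 < 4 * (1 + 5 * δ - 4 * δ ^ 2) := by nlinarith
  have hs : 0 < Real.sqrt (4 * (1 + 5 * δ - 4 * δ ^ 2) / ((1 - δ) * (32 - 25 * δ))) :=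
    Real.sqrt_pos.mpr (div_pos hn hd)
  have hle : Real.sqrt (4 * (1 + 5 * δ - 4 * δ ^ 2) / ((1 - δ) * (32 - 25 * δ))) ≤ 20 / 21 := by
    rw [Real.sqrt_le_left (by norm_num), div_le_iff₀ hd]
    nlinarith [sq_nonneg (δ - 4663 / 10000)]
  refine ⟨?_, hle⟩
  have h : (21 / 20 : ℝ) ≤
      1 / Real.sqrt (4 * (1 + 5 * δ - 4 * δ ^ 2) / ((1 - δ) * (32 - 25 * δ))) := by
    rw [le_div_iff₀ hs]
    linarith
  norm_num at h ⊢
  linarith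
end
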